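/- arXiv:1510.02903 — 2 statements merged into one kernel-verified Lean document; each statement's English description precedes it below -/
import Mathlib

section
/- Assume conditions (H1) and (H2) hold and let T_β = T(h_β) be the SR procedure with threshold h_β = (1−α₂(β,k*_β))/(ϱ_{2,β}·α₂(β,k*_β)). Then for any 0 < β < 1, T_β ∈ H(β,k*_β,m*_β). If additionally condition (A2) holds with limit I ∈ (0,∞), then as β → 0: inf_{τ∈H(β,k*_β,m*_β)} R_ν(τ) / R_ν(T_β) → 1 for every ν ≥ 0, inf_{τ∈H(β,k*_β,m*_β)} sup_{ν≥0} R_ν(τ) / sup_{ν≥0} R_ν(T_β) → 1, and R_ν(T_β) ~ inf_{τ∈H(β,k*_β,m*_β)} R_ν(τ) ~ |log β|/I for every ν ≥ 0, as well as sup_{ν≥0} R_ν(T_β) ~ inf_{τ∈H(β,k*_β,m*_β)} sup_{ν≥0} R_ν(τ) ~ |log β|/I. -/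
open MeasureTheory Filter Set Topology ENNReal

noncomputable section

/-- A general change-point model: a filtration `F` on `Ω`, probability measures `P k`
(the change occurs immediately after time `k`) and `Pinf` (no change), such that `P k`
and `Pinf` agree on `F n` for `n ≤ k` and are mutually absolutely continuous
on `F n` for `n > k`. -/
structure ChangePointModel (Ω : Type) [m0 : MeasurableSpace Ω] where
  F : ℕ → MeasurableSpace Ω
  F_le : ∀ n, F n ≤ m0
  F_mono : Monotone F
  F_zero : F 0 = ⊥
  P : ℕ → Measure Ω
  Pinf : Measure Ω
  P_prob : ∀ k, IsProbabilityMeasure (P k)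
  Pinf_prob : IsProbabilityMeasure Pinf
  agree : ∀ k n : ℕ, n ≤ k → (P k).trim (F_le n) = Pinf.trim (F_le n)
  ac₁ : ∀ k n : ℕ, k < n → (P k).trim (F_le n) ≪ Pinf.trim (F_le n)
  ac₂ : ∀ k n : ℕ, k < n → Pinf.trim (F_le n) ≪ (P k).trim (F_le n)

namespace ChangePointModel

variable {Ω : Type} [m0 : MeasurableSpace Ω] (M : ChangePointModel Ω)

/-- The log-likelihood ratio `Z n k = log (d(P k|F n)/d(P∞|F n))`. -/
def Z (n k : ℕ) (ω : Ω) : ℝ :=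
  Real.log ((((M.P k).trim (M.F_le n)).rnDeriv (M.Pinf.trim (M.F_le n))) ω).toReal

/-- A detection procedure: a stopping time of the filtration `F` with values in `{1,2,…,∞}`. -/
def IsDetection (τ : Ω → ℕ∞) : Prop :=
  (∀ ω, 1 ≤ τ ω) ∧ ∀ n : ℕ, MeasurableSet[M.F n] {ω | τ ω ≤ (n : ℕ∞)}

/-- The detection risk `R_ν(τ) = E_ν (τ - ν)⁺`. -/
def risk (ν : ℕ) (τ : Ω → ℕ∞) : ℝ≥0∞ :=
  ∫⁻ ω, ((τ ω - (ν : ℕ∞) : ℕ∞) : ℝ≥0∞) ∂(M.P ν)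

/-- The conditional detection risk `R*_ν(τ) = E_ν (τ - ν | τ > ν)`. -/
def crisk (ν : ℕ) (τ : Ω → ℕ∞) : ℝ≥0∞ :=
  M.risk ν τ / M.P ν {ω | (ν : ℕ∞) < τ ω}

/-- The moment-`ℓ` detection risk `E_ν ((τ - ν)⁺)^ℓ`. -/
def riskPow (ℓ : ℝ) (ν : ℕ) (τ : Ω → ℕ∞) : ℝ≥0∞ :=
  ∫⁻ ω, ((τ ω - (ν : ℕ∞) : ℕ∞) : ℝ≥0∞) ^ ℓ ∂(M.P ν)

/-- The conditional moment-`ℓ` detection risk `E_ν ((τ - ν)^ℓ | τ > ν)`. -/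
def criskPow (ℓ : ℝ) (ν : ℕ) (τ : Ω → ℕ∞) : ℝ≥0∞ :=
  M.riskPow ℓ ν τ / M.P ν {ω | (ν : ℕ∞) < τ ω}

/-- The Bayesian class `Δ(α,ϱ)` of detection procedures with weighted probability of
false alarm at most `α` (geometric prior with parameter `ϱ`). -/
def Delta (α ϱ : ℝ) : Set (Ω → ℕ∞) :=
  {τ | M.IsDetection τ ∧
    ∑' k : ℕ, ENNReal.ofReal (ϱ * (1 - ϱ) ^ k) * M.Pinf {ω | τ ω ≤ (k : ℕ∞)}
      ≤ ENNReal.ofReal α}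

/-- The Shiryaev–Roberts statistic `R_n = ∑_{k=1}^n exp (Z_n^{k-1})`. -/
def SRstat (n : ℕ) (ω : Ω) : ℝ :=
  ∑ k ∈ Finset.range n, Real.exp (M.Z n k ω)

/-- The Shiryaev–Roberts procedure with threshold `h`. -/
def SR (h : ℝ) (ω : Ω) : ℕ∞ :=
  sInf {n : ℕ∞ | ∃ m : ℕ, n = (m : ℕ∞) ∧ 1 ≤ m ∧ h ≤ M.SRstat m ω}

/-- Condition (A1): `Z (k+n) k / n → I` almost surely under `P k`, for every `k`. -/
def CondA1 (I : ℝ) : Prop :=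
  ∀ k : ℕ, ∀ᵐ ω ∂(M.P k),
    Tendsto (fun n : ℕ => M.Z (k + n) k ω / n) atTop (𝓝 I)

/-- Condition (A2): uniform complete convergence of `Z (k+n) k / n` to `I`. -/
def CondA2 (I : ℝ) : Prop :=
  ∀ ε : ℝ, 0 < ε →
    (∑' n : ℕ, ⨆ k : ℕ,
      M.P k {ω | ε < |M.Z (k + (n + 1)) k ω / (n + 1) - I|}) < ⊤

/-- Uniform `r`-complete convergence of `Z (k+n) k / n` to `I`. -/
def CondAr (r I : ℝ) : Prop :=
  ∀ ε : ℝ, 0 < ε →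
    (∑' n : ℕ, ENNReal.ofReal ((n + 1 : ℝ) ^ (r - 1)) * ⨆ k : ℕ,
      M.P k {ω | ε < |M.Z (k + (n + 1)) k ω / (n + 1) - I|}) < ⊤

/-- The class `H(β,k*,m*)` : local probability of a false alarm in windows of
length `m*` starting at `1 ≤ k ≤ k* - m*` is at most `β`. -/
def Hclass (β : ℝ) (kstar mstar : ℕ) : Set (Ω → ℕ∞) :=
  {τ | M.IsDetection τ ∧ ∀ k : ℕ, 1 ≤ k → k + mstar ≤ kstar →
    M.Pinf {ω | (k : ℕ∞) ≤ τ ω ∧ τ ω < ((k + mstar : ℕ) : ℕ∞)} ≤ ENNReal.ofReal β}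

/-- The class `H*(β,k*,m*)` : local conditional probability of a false alarm
`P_∞(τ < k+m* | τ > k)` is at most `β` for `1 ≤ k ≤ k* - m*`. -/
def HclassStar (β : ℝ) (kstar mstar : ℕ) : Set (Ω → ℕ∞) :=
  {τ | M.IsDetection τ ∧ ∀ k : ℕ, 1 ≤ k → k + mstar ≤ kstar →
    M.Pinf {ω | (k : ℕ∞) < τ ω ∧ τ ω < ((k + mstar : ℕ) : ℕ∞)}
        / M.Pinf {ω | (k : ℕ∞) < τ ω} ≤ ENNReal.ofReal β}

end ChangePointModel

/-- `ϱ_{1,β} = 1/(1+|log β|)`. -/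
def rho1 (β : ℝ) : ℝ := 1 / (1 + |Real.log β|)

/-- `ϱ_{2,β} = ϱ_{1,β}/(1+|log|log β||)`. -/
def rho2 (β : ℝ) : ℝ := rho1 β / (1 + |Real.log (|Real.log β|)|)

/-- `α₁(β,m*) = β + (1-ϱ_{1,β})^{m*+1}`. -/
def alpha1 (β : ℝ) (m : ℕ) : ℝ := β + (1 - rho1 β) ^ (m + 1)

/-- `α₂(β,k*) = β (1-ϱ_{2,β})^{k*}`. -/
def alpha2 (β : ℝ) (k : ℕ) : ℝ := β * (1 - rho2 β) ^ k

/-- `α₃(β,k*) = β (1-ϱ_{2,β})^{k*} / (1+β)`. -/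
def alpha3 (β : ℝ) (k : ℕ) : ℝ := β * (1 - rho2 β) ^ k / (1 + β)

/-!
Every risk in the theorem lies between `⨅ τ, R_ν(τ)` and `⨆ ν, R_ν(T_β)`, so it suffices to bound
the former from below and the latter from above by `(1 + o(1)) |log β| / I`.

* Membership. Optional stopping of `R_n - n` under `P_∞`, in the form of a change of measure on
  each event `{T_β = m}`, gives `P_∞(T_β ≤ k*) ≤ k* / h_β`, and this is at most `β` because of
  Bernoulli's inequality `(1 + k ϱ) (1 - ϱ)^k ≤ 1`.
* Lower bound. Condition (H1) forces `m* / |log β| → ∞`, so `P_∞(τ ≤ ν + b |log β| / I) ≤ β` for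
  every `τ` in the class and every `b < 1`. Up to that time the log-likelihood ratio is, with
  `P_ν`-probability close to one, at most `d |log β|` with `d < 1`, so passing from `P_∞` to `P_ν`
  costs a factor `β ^ (-d)`, and `P_ν(τ ≤ ν + b |log β| / I) → 0`.
* Upper bound. As `R_n ≥ exp (Z_n^ν)`, the procedure can only survive past `ν + n` if
  `Z_{ν+n}^ν < log h_β`, where `log h_β ≤ (1 + o(1)) |log β|` by (H2). For `n ≥ b |log β| / I`
  with `b > 1` the probabilities of these events are summable uniformly in `ν` and `β`, by (A2).
-/

/-! ### Extended nonnegative reals -/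

section ENNReal

lemma toENNReal_eq_tsum (x : ℕ∞) : (x : ℝ≥0∞) = ∑' n : ℕ, if (n : ℕ∞) < x then 1 else 0 := by
  induction x using ENat.recTopCoe with
  | top => simp
  | coe a =>
    rw [tsum_eq_sum (s := Finset.range a) fun n hn => by simpa using hn]
    rw [Finset.sum_congr rfl fun n hn => if_pos (by simpa using hn)]
    simp

variable {ι : Type*} {l : Filter ι} {f g u : ι → ℝ≥0∞}

lemma tendsto_div_one_of_forall_mul_le (hg0 : ∀ᶠ i in l, g i ≠ 0) (hgt : ∀ᶠ i in l, g i ≠ ⊤)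
    (hlow : ∀ c : NNReal, c < 1 → ∀ᶠ i in l, c * g i ≤ f i)
    (hup : ∀ c : NNReal, 1 < c → ∀ᶠ i in l, f i ≤ c * g i) :
    Tendsto (fun i => f i / g i) l (𝓝 1) := by
  refine tendsto_order.2 ⟨fun a ha => ?_, fun a ha => ?_⟩
  · obtain ⟨c, hac, hc⟩ := ENNReal.lt_iff_exists_nnreal_btwn.1 ha
    filter_upwards [hlow c (by exact_mod_cast hc), hg0, hgt] with i hi h0 ht
    exact hac.trans_le ((ENNReal.le_div_iff_mul_le (.inl h0) (.inl ht)).2 hi)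
  · obtain ⟨c, hc, hca⟩ := ENNReal.lt_iff_exists_nnreal_btwn.1 ha
    filter_upwards [hup c (by exact_mod_cast hc), hg0, hgt] with i hi h0 ht
    exact ((ENNReal.div_le_iff h0 ht).2 hi).trans_lt hca

lemma tendsto_div_one_trans (hu0 : ∀ᶠ i in l, u i ≠ 0) (hut : ∀ᶠ i in l, u i ≠ ⊤)
    (hf : Tendsto (fun i => f i / u i) l (𝓝 1)) (hg : Tendsto (fun i => g i / u i) l (𝓝 1)) :
    Tendsto (fun i => f i / g i) l (𝓝 1) := by
  have hfg := ENNReal.Tendsto.div hf (.inl one_ne_zero) hg (.inl one_ne_top)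
  rw [div_one] at hfg
  refine hfg.congr' ?_
  filter_upwards [hu0, hut] with i h0 ht
  rw [div_eq_mul_inv (f i), div_eq_mul_inv (g i),
    ENNReal.mul_div_mul_right _ _ (ENNReal.inv_ne_zero.2 ht) (ENNReal.inv_ne_top.2 h0)]

end ENNReal

/-! ### Linear growth of floors and ceilings -/

section FloorCeil

variable {a b : ℝ}

lemma eventually_mul_le_natFloor_mul (hb : 0 ≤ b) (hab : a < b) :
    ∀ᶠ x : ℝ in atTop, a * x ≤ ⌊b * x⌋₊ := by
  filter_upwards [(tendsto_nat_floor_mul_div_atTop hb).eventually_const_le hab,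
    eventually_gt_atTop 0] with x hx hx0
  exact (le_div_iff₀ hx0).1 hx

lemma eventually_natCeil_mul_add_le_mul (ha : 0 ≤ a) (hab : a < b) (s : ℝ) :
    ∀ᶠ x : ℝ in atTop, ⌈a * x⌉₊ + s ≤ b * x := by
  have hlim := (tendsto_nat_ceil_mul_div_atTop ha).add
    (tendsto_const_nhds (x := s).div_atTop tendsto_id)
  rw [add_zero] at hlim
  filter_upwards [hlim.eventually_le_const hab, eventually_gt_atTop 0] with x hx hx0
  rwa [id, ← add_div, div_le_iff₀ hx0] at hx

end FloorCeil

namespace ChangePointModel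

variable {Ω : Type} [m0 : MeasurableSpace Ω] (M : ChangePointModel Ω)

instance isProbabilityMeasure_P (k : ℕ) : IsProbabilityMeasure (M.P k) := M.P_prob k

instance isProbabilityMeasure_Pinf : IsProbabilityMeasure M.Pinf := M.Pinf_prob

/-! ### Change of measure -/

lemma trim_P_absolutelyContinuous (k n : ℕ) :
    (M.P k).trim (M.F_le n) ≪ M.Pinf.trim (M.F_le n) := by
  rcases le_or_gt n k with hnk | hkn
  · rw [M.agree k n hnk]
  · exact M.ac₁ k n hkn

lemma trim_Pinf_absolutelyContinuous (k n : ℕ) :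
    M.Pinf.trim (M.F_le n) ≪ (M.P k).trim (M.F_le n) := by
  rcases le_or_gt n k with hnk | hkn
  · rw [M.agree k n hnk]
  · exact M.ac₂ k n hkn

lemma measurable_Z (n k : ℕ) : Measurable[M.F n] (M.Z n k) :=
  Real.measurable_log.comp (ENNReal.measurable_toReal.comp (Measure.measurable_rnDeriv _ _))

/-- Mutual absolute continuity makes the density positive and finite almost everywhere, so the
junk value `log 0 = 0` in `Z` is harmless. -/
lemma ofReal_exp_Z_ae_eq_rnDeriv (n k : ℕ) :
    (fun ω => ENNReal.ofReal (Real.exp (M.Z n k ω))) =ᵐ[M.Pinf]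
      ((M.P k).trim (M.F_le n)).rnDeriv (M.Pinf.trim (M.F_le n)) := by
  filter_upwards [ae_of_ae_trim (M.F_le n)
      (Measure.rnDeriv_pos' (M.trim_Pinf_absolutelyContinuous k n)),
    ae_of_ae_trim (M.F_le n) (Measure.rnDeriv_ne_top ((M.P k).trim (M.F_le n)) _)] with ω h0 ht
  rw [Z, Real.exp_log (ENNReal.toReal_pos h0.ne' ht), ENNReal.ofReal_toReal ht]

lemma setLIntegral_exp_Z (k : ℕ) {n : ℕ} {A : Set Ω} (hA : MeasurableSet[M.F n] A) :
    ∫⁻ ω in A, ENNReal.ofReal (Real.exp (M.Z n k ω)) ∂M.Pinf = M.P k A := by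
  rw [lintegral_congr_ae (ae_restrict_of_ae (M.ofReal_exp_Z_ae_eq_rnDeriv n k)),
    ← setLIntegral_trim (M.F_le n) (Measure.measurable_rnDeriv _ _) hA,
    Measure.setLIntegral_rnDeriv (M.trim_P_absolutelyContinuous k n),
    trim_measurableSet_eq (M.F_le n) hA]

lemma P_le_exp_mul_Pinf {k n : ℕ} {A : Set Ω} (hA : MeasurableSet[M.F n] A) {C : ℝ}
    (hC : ∀ ω ∈ A, M.Z n k ω ≤ C) : M.P k A ≤ ENNReal.ofReal (Real.exp C) * M.Pinf A := by
  rw [← M.setLIntegral_exp_Z k hA, ← setLIntegral_const]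
  exact setLIntegral_mono' (M.F_le n _ hA) fun ω hω => by gcongr; exact hC ω hω

lemma P_le_exp_mul_Pinf_add (k : ℕ) {n : ℕ} {A : Set Ω} (hA : MeasurableSet[M.F n] A) (C : ℝ) :
    M.P k A ≤ ENNReal.ofReal (Real.exp C) * M.Pinf A + M.P k {ω | C < M.Z n k ω} := by
  have hB : MeasurableSet[M.F n] (A ∩ {ω | M.Z n k ω ≤ C}) :=
    MeasurableSet.inter hA (M.measurable_Z n k measurableSet_Iic)
  calc M.P k A ≤ M.P k (A ∩ {ω | M.Z n k ω ≤ C} ∪ {ω | C < M.Z n k ω}) :=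
        measure_mono fun ω hω => (le_or_gt (M.Z n k ω) C).imp (And.intro hω) id
    _ ≤ M.P k (A ∩ {ω | M.Z n k ω ≤ C}) + M.P k {ω | C < M.Z n k ω} := measure_union_le _ _
    _ ≤ ENNReal.ofReal (Real.exp C) * M.Pinf (A ∩ {ω | M.Z n k ω ≤ C})
          + M.P k {ω | C < M.Z n k ω} := by
        gcongr
        exact M.P_le_exp_mul_Pinf hB fun ω hω => hω.2
    _ ≤ _ := by
        gcongr
        exact inter_subset_left

/-! ### Detection procedures and their risk -/

/-- The filtration of the model as a `MeasureTheory.Filtration`, giving access to the library of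
stopping times and hitting times. -/
def filtration : Filtration ℕ m0 := ⟨M.F, M.F_mono, M.F_le⟩

section IsDetection

variable {M} {τ : Ω → ℕ∞}

lemma IsDetection.isStoppingTime (hτ : M.IsDetection τ) : IsStoppingTime M.filtration τ := hτ.2

lemma IsDetection.measurableSet_eq (hτ : M.IsDetection τ) (n : ℕ) :
    MeasurableSet[M.F n] {ω | τ ω = n} :=
  hτ.isStoppingTime.measurableSet_eq n

lemma IsDetection.measurableSet_gt (hτ : M.IsDetection τ) (n : ℕ) :
    MeasurableSet {ω | (n : ℕ∞) < τ ω} :=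
  M.F_le n _ (hτ.isStoppingTime.measurableSet_gt n)

lemma IsDetection.measure_le_eq_sum (hτ : M.IsDetection τ) (μ : Measure Ω) (n : ℕ) :
    μ {ω | τ ω ≤ n} = ∑ m ∈ Finset.range (n + 1), μ {ω | τ ω = m} := by
  rw [← measure_biUnion_finset _ fun m _ => M.F_le m _ (hτ.measurableSet_eq m)]
  · congr 1
    ext ω
    simp [ENat.le_natCast_iff, and_comm]
  · intro a _ b _ hab
    exact Set.disjoint_left.2 fun ω ha hb => hab (by exact_mod_cast ha.symm.trans hb)

lemma IsDetection.risk_eq_tsum (hτ : M.IsDetection τ) (ν : ℕ) :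
    M.risk ν τ = ∑' n : ℕ, M.P ν {ω | ((ν + n : ℕ) : ℕ∞) < τ ω} := by
  have hind : ∀ ω, ((τ ω - ν : ℕ∞) : ℝ≥0∞)
      = ∑' n : ℕ, {ω | ((ν + n : ℕ) : ℕ∞) < τ ω}.indicator 1 ω := fun ω => by
    simp [toENNReal_eq_tsum (τ ω - ν), Set.indicator_apply, lt_tsub_iff_left]
  rw [risk, lintegral_congr hind,
    lintegral_tsum fun n => (measurable_one.indicator (hτ.measurableSet_gt _)).aemeasurable]
  exact tsum_congr fun n => lintegral_indicator_one (hτ.measurableSet_gt _)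

lemma IsDetection.natCast_mul_P_gt_le_risk (hτ : M.IsDetection τ) (ν L : ℕ) :
    L * M.P ν {ω | ((ν + L : ℕ) : ℕ∞) < τ ω} ≤ M.risk ν τ := by
  rw [hτ.risk_eq_tsum]
  refine le_trans ?_ (ENNReal.sum_le_tsum (Finset.range L))
  rw [← nsmul_eq_mul, ← Finset.card_range L, ← Finset.sum_const, Finset.card_range]
  refine Finset.sum_le_sum fun n hn => measure_mono fun ω hω => ?_
  have hnL : ((ν + n : ℕ) : ℕ∞) ≤ ((ν + L : ℕ) : ℕ∞) := by
    exact_mod_cast Nat.add_le_add_left (Finset.mem_range.1 hn).le ν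
  exact hnL.trans_lt hω

lemma IsDetection.risk_le_natCast_add_tsum (hτ : M.IsDetection τ) (ν N : ℕ) :
    M.risk ν τ ≤ N + ∑' n : ℕ, M.P ν {ω | ((ν + (n + N) : ℕ) : ℕ∞) < τ ω} := by
  rw [hτ.risk_eq_tsum, ← ENNReal.summable.sum_add_tsum_nat_add' (k := N)]
  gcongr
  calc _ ≤ ∑ _n ∈ Finset.range N, (1 : ℝ≥0∞) := Finset.sum_le_sum fun n _ => prob_le_one
    _ = N := by simp

end IsDetection

/-! ### The Shiryaev–Roberts procedure -/

lemma measurable_SRstat (n : ℕ) : Measurable[M.F n] (M.SRstat n) :=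
  Finset.measurable_fun_sum _ fun k _ => Real.measurable_exp.comp (M.measurable_Z n k)

lemma exp_Z_le_SRstat {k n : ℕ} (hkn : k < n) (ω : Ω) : Real.exp (M.Z n k ω) ≤ M.SRstat n ω :=
  Finset.single_le_sum (f := fun k => Real.exp (M.Z n k ω)) (fun _ _ => (Real.exp_pos _).le)
    (Finset.mem_range.2 hkn)

lemma setLIntegral_SRstat {n : ℕ} {A : Set Ω} (hA : MeasurableSet[M.F n] A) :
    ∫⁻ ω in A, ENNReal.ofReal (M.SRstat n ω) ∂M.Pinf = ∑ k ∈ Finset.range n, M.P k A := by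
  have hmeas : ∀ k, Measurable fun ω => ENNReal.ofReal (Real.exp (M.Z n k ω)) := fun k =>
    ENNReal.measurable_ofReal.comp
      (Real.measurable_exp.comp ((M.measurable_Z n k).mono (M.F_le n) le_rfl))
  simp only [SRstat, ENNReal.ofReal_sum_of_nonneg fun _ _ => (Real.exp_pos _).le]
  rw [lintegral_finsetSum _ fun k _ => hmeas k]
  exact Finset.sum_congr rfl fun k _ => M.setLIntegral_exp_Z k hA

lemma SR_eq_hittingAfter (h : ℝ) : M.SR h = hittingAfter M.SRstat (Ici h) 1 := by
  ext ω
  refine le_antisymm ?_ (le_sInf ?_)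
  · by_cases htop : hittingAfter M.SRstat (Ici h) 1 ω = ⊤
    · exact htop ▸ le_top
    obtain ⟨n, hn⟩ := WithTop.ne_top_iff_exists.1 htop
    obtain ⟨m, hm, hmem⟩ := hittingAfter_le_iff.1 hn.ge
    rw [← hn]
    have hle : M.SR h ω ≤ (m : ℕ∞) := sInf_le ⟨m, rfl, hm.1, hmem⟩
    exact hle.trans (WithTop.coe_le_coe.2 hm.2)
  · rintro _ ⟨m, rfl, hm, hh⟩
    exact hittingAfter_le_of_mem hm hh

lemma isDetection_SR (h : ℝ) : M.IsDetection (M.SR h) := by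
  rw [SR_eq_hittingAfter]
  have hadapted : Adapted M.filtration M.SRstat := M.measurable_SRstat
  exact ⟨fun ω => le_hittingAfter ω, hadapted.isStoppingTime_hittingAfter measurableSet_Ici⟩

lemma le_SRstat_of_SR_eq {h : ℝ} {ω : Ω} {m : ℕ} (hm : M.SR h ω = m) : h ≤ M.SRstat m ω := by
  rw [SR_eq_hittingAfter] at hm
  have hmem := hittingAfter_mem_set_of_ne_top (hm.trans_ne (ENat.natCast_ne_top m))
  rwa [hm] at hmem

lemma SRstat_lt_of_lt_SR {h : ℝ} {ω : Ω} {m : ℕ} (hm : 1 ≤ m) (hlt : (m : ℕ∞) < M.SR h ω) :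
    M.SRstat m ω < h := by
  rw [SR_eq_hittingAfter] at hlt
  exact not_le.1 (notMem_of_lt_hittingAfter hlt hm)

lemma Z_lt_log_of_lt_SR {h : ℝ} {ω : Ω} {k n : ℕ} (hkn : k < n) (hlt : (n : ℕ∞) < M.SR h ω) :
    M.Z n k ω < Real.log h := by
  have hexp : Real.exp (M.Z n k ω) < h :=
    (M.exp_Z_le_SRstat hkn ω).trans_lt (M.SRstat_lt_of_lt_SR (by omega) hlt)
  exact (Real.lt_log_iff_exp_lt ((Real.exp_pos _).trans hexp)).2 hexp

section FalseAlarm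

variable {M} {τ : Ω → ℕ∞}

lemma IsDetection.mul_Pinf_eq_le_sum (hτ : M.IsDetection τ) {h : ℝ} {m : ℕ}
    (hR : ∀ ω, τ ω = m → h ≤ M.SRstat m ω) :
    ENNReal.ofReal h * M.Pinf {ω | τ ω = m} ≤ ∑ k ∈ Finset.range m, M.P k {ω | τ ω = m} := by
  rw [← M.setLIntegral_SRstat (hτ.measurableSet_eq m), ← setLIntegral_const]
  exact setLIntegral_mono' (M.F_le m _ (hτ.measurableSet_eq m))
    fun ω hω => ENNReal.ofReal_le_ofReal (hR ω hω)

lemma IsDetection.mul_Pinf_le_le (hτ : M.IsDetection τ) {h : ℝ}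
    (hR : ∀ ω (m : ℕ), τ ω = m → h ≤ M.SRstat m ω) (n : ℕ) :
    ENNReal.ofReal h * M.Pinf {ω | τ ω ≤ n} ≤ n := by
  calc ENNReal.ofReal h * M.Pinf {ω | τ ω ≤ n}
      = ∑ m ∈ Finset.range (n + 1), ENNReal.ofReal h * M.Pinf {ω | τ ω = m} := by
        rw [hτ.measure_le_eq_sum, Finset.mul_sum]
    _ ≤ ∑ m ∈ Finset.range (n + 1), ∑ k ∈ Finset.range n, M.P k {ω | τ ω = m} := by
        refine Finset.sum_le_sum fun m hm => ?_
        refine (hτ.mul_Pinf_eq_le_sum fun ω => hR ω m).trans (Finset.sum_le_sum_of_subset ?_)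
        exact Finset.range_mono (Nat.lt_succ_iff.1 (Finset.mem_range.1 hm))
    _ = ∑ k ∈ Finset.range n, M.P k {ω | τ ω ≤ n} := by
        rw [Finset.sum_comm]
        exact Finset.sum_congr rfl fun k _ => (hτ.measure_le_eq_sum (M.P k) n).symm
    _ ≤ ∑ _k ∈ Finset.range n, 1 := Finset.sum_le_sum fun k _ => prob_le_one
    _ = n := by simp

end FalseAlarm

lemma SR_mem_Hclass {β h : ℝ} {k : ℕ} (hh : 0 < h) (hk : k ≤ h * β) (m : ℕ) :
    M.SR h ∈ M.Hclass β k m := by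
  refine ⟨M.isDetection_SR h, fun j _ hjk => ?_⟩
  have hwindow : {ω | (j : ℕ∞) ≤ M.SR h ω ∧ M.SR h ω < ((j + m : ℕ) : ℕ∞)}
      ⊆ {ω | M.SR h ω ≤ k} := fun ω hω => hω.2.le.trans (by exact_mod_cast hjk)
  refine (measure_mono hwindow).trans ?_
  rw [← ENNReal.mul_le_mul_iff_right (ENNReal.ofReal_pos.2 hh).ne' ENNReal.ofReal_ne_top]
  calc ENNReal.ofReal h * M.Pinf {ω | M.SR h ω ≤ k}
      ≤ k := (M.isDetection_SR h).mul_Pinf_le_le (fun ω m => M.le_SRstat_of_SR_eq) k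
    _ ≤ ENNReal.ofReal (h * β) := by
        rw [← ENNReal.ofReal_natCast]
        exact ENNReal.ofReal_le_ofReal hk
    _ = ENNReal.ofReal h * ENNReal.ofReal β := ENNReal.ofReal_mul hh.le

/-! ### Complete convergence of the log-likelihood ratio -/

section CondA2

variable {M} {I : ℝ}

lemma CondA2.tsum_iSup_P_abs_sub_ne_top (hA2 : M.CondA2 I) {ε : ℝ} (hε : 0 < ε) :
    ∑' n : ℕ, ⨆ k, M.P k {ω | ε * n < |M.Z (k + n) k ω - I * n|} ≠ ⊤ := by
  rw [tsum_eq_zero_add' ENNReal.summable]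
  refine ENNReal.add_ne_top.2
    ⟨((iSup_le fun k => prob_le_one).trans_lt one_lt_top).ne, ne_top_of_le_ne_top (hA2 ε hε).ne ?_⟩
  refine ENNReal.tsum_le_tsum fun n => iSup_mono fun k => measure_mono fun ω hω => ?_
  have hn : (0 : ℝ) < n + 1 := by positivity
  simp only [mem_ofPred_eq, Nat.cast_add_one] at hω ⊢
  rwa [div_sub' hn.ne', abs_div, abs_of_pos hn, lt_div_iff₀ hn, mul_comm _ I]

lemma CondA2.tsum_iSup_P_Z_lt_ne_top (hA2 : M.CondA2 I) {J : ℝ} (hJ : J < I) :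
    ∑' n : ℕ, ⨆ k, M.P k {ω | M.Z (k + n) k ω < J * n} ≠ ⊤ := by
  refine ne_top_of_le_ne_top (hA2.tsum_iSup_P_abs_sub_ne_top (sub_pos.2 hJ)) ?_
  refine ENNReal.tsum_le_tsum fun n => iSup_mono fun k => measure_mono fun ω hω => ?_
  rw [mem_ofPred_eq] at hω ⊢
  exact lt_abs.2 (.inr (by linarith))

lemma CondA2.tendsto_P_lt_Z (hA2 : M.CondA2 I) {J : ℝ} (hJ : I < J) (ν : ℕ) :
    Tendsto (fun n : ℕ => M.P ν {ω | J * n < M.Z (ν + n) ν ω}) atTop (𝓝 0) := by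
  refine tendsto_of_tendsto_of_tendsto_of_le_of_le tendsto_const_nhds
    (ENNReal.tendsto_atTop_zero_of_tsum_ne_top
      (hA2.tsum_iSup_P_abs_sub_ne_top (sub_pos.2 hJ))) (fun _ => zero_le) fun n => ?_
  refine le_trans (measure_mono fun ω hω => ?_) (le_iSup (fun k => M.P k _) ν)
  rw [mem_ofPred_eq] at hω ⊢
  exact lt_abs.2 (.inl (by linarith))

end CondA2

/-! ### Lower bound for the risk -/

section LowerBound

variable {M} {I : ℝ} {ν : ℕ}

/-- At time `ν + b * (y / I)` the log-likelihood ratio is, with high probability, at most `d * y`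
with `d < 1`: the change of measure costs a factor `exp (d * y)`, which `exp (-y)` beats. -/
lemma eventually_P_le_lt {b : ℝ} (hI : 0 < I) (hb0 : 0 < b) (hb1 : b < 1)
    (hZ : ∀ J, I < J → Tendsto (fun n : ℕ => M.P ν {ω | J * n < M.Z (ν + n) ν ω}) atTop (𝓝 0))
    {ε : ℝ≥0∞} (hε : 0 < ε) :
    ∀ᶠ y in atTop, ∀ τ, M.IsDetection τ →
      M.Pinf {ω | τ ω ≤ (ν + ⌊b * (y / I)⌋₊ : ℕ)} ≤ ENNReal.ofReal (Real.exp (-y)) →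
      M.P ν {ω | τ ω ≤ (ν + ⌊b * (y / I)⌋₊ : ℕ)} < ε := by
  obtain ⟨J, hIJ, hJ⟩ := exists_between ((lt_div_iff₀ hb0).2 (mul_lt_of_lt_one_right hI hb1))
  have hδ : 0 < 1 - J * b / I := by
    rw [sub_pos, div_lt_one hI]
    exact (lt_div_iff₀ hb0).1 hJ
  have hfloor : Tendsto (fun y : ℝ => ⌊b * (y / I)⌋₊) atTop atTop :=
    tendsto_nat_floor_atTop.comp ((tendsto_id.atTop_div_const hI).const_mul_atTop hb0)
  have hexp : Tendsto (fun y : ℝ => ENNReal.ofReal (Real.exp (-((1 - J * b / I) * y))))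
      atTop (𝓝 0) := by
    have := ENNReal.tendsto_ofReal
      (Real.tendsto_exp_neg_atTop_nhds_zero.comp (tendsto_id.const_mul_atTop hδ))
    rwa [ENNReal.ofReal_zero] at this
  have hsum := hexp.add ((hZ J hIJ).comp hfloor)
  rw [add_zero] at hsum
  filter_upwards [hsum.eventually_lt_const hε, eventually_ge_atTop 0] with y hy hy0 τ hτ hfa
  refine lt_of_le_of_lt ?_ hy
  refine (M.P_le_exp_mul_Pinf_add ν (hτ.2 _) (J * ⌊b * (y / I)⌋₊)).trans ?_
  gcongr ?_ + _
  have hexponent : J * ⌊b * (y / I)⌋₊ + -y ≤ -((1 - J * b / I) * y) := by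
    have := mul_le_mul_of_nonneg_left (Nat.floor_le (by positivity : 0 ≤ b * (y / I)))
      (hI.trans hIJ).le
    linarith [show J * (b * (y / I)) = J * b / I * y by ring]
  calc _ ≤ ENNReal.ofReal (Real.exp (J * ⌊b * (y / I)⌋₊)) * ENNReal.ofReal (Real.exp (-y)) := by
        gcongr
    _ = ENNReal.ofReal (Real.exp (J * ⌊b * (y / I)⌋₊ + -y)) := by
        rw [← ENNReal.ofReal_mul (Real.exp_pos _).le, ← Real.exp_add]
    _ ≤ _ := by gcongr

lemma eventually_le_P_gt {b : ℝ} (hI : 0 < I) (hb0 : 0 < b) (hb1 : b < 1)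
    (hZ : ∀ J, I < J → Tendsto (fun n : ℕ => M.P ν {ω | J * n < M.Z (ν + n) ν ω}) atTop (𝓝 0))
    {d : ℝ≥0∞} (hd : d < 1) :
    ∀ᶠ y in atTop, ∀ τ, M.IsDetection τ →
      M.Pinf {ω | τ ω ≤ (ν + ⌊b * (y / I)⌋₊ : ℕ)} ≤ ENNReal.ofReal (Real.exp (-y)) →
      d ≤ M.P ν {ω | ((ν + ⌊b * (y / I)⌋₊ : ℕ) : ℕ∞) < τ ω} := by
  filter_upwards [eventually_P_le_lt hI hb0 hb1 hZ (tsub_pos_iff_lt.2 hd)] with y hP τ hτ hfa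
  have hcompl : {ω | ((ν + ⌊b * (y / I)⌋₊ : ℕ) : ℕ∞) < τ ω}
      = {ω | τ ω ≤ (ν + ⌊b * (y / I)⌋₊ : ℕ)}ᶜ := by
    ext ω
    simp
  rw [hcompl, prob_compl_eq_one_sub (M.F_le _ _ (hτ.2 _))]
  exact ENNReal.le_sub_of_add_le_left (measure_ne_top _ _)
    (lt_tsub_iff_right.1 (hP τ hτ hfa)).le

lemma eventually_mul_le_risk (hI : 0 < I)
    (hZ : ∀ J, I < J → Tendsto (fun n : ℕ => M.P ν {ω | J * n < M.Z (ν + n) ν ω}) atTop (𝓝 0))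
    {c : NNReal} (hc : c < 1) :
    ∀ᶠ y in atTop, ∀ τ, M.IsDetection τ →
      M.Pinf {ω | τ ω ≤ (ν + ⌊y / I⌋₊ : ℕ)} ≤ ENNReal.ofReal (Real.exp (-y)) →
      c * ENNReal.ofReal (y / I) ≤ M.risk ν τ := by
  obtain ⟨a, hca, ha1⟩ := exists_between hc
  obtain ⟨b, hab, hb1⟩ := exists_between ha1
  have ha0 : 0 < a := zero_le.trans_lt hca
  have hd : ((c / a : NNReal) : ℝ≥0∞) < 1 := by exact_mod_cast (div_lt_one ha0).2 hca
  have hfloor : ∀ᶠ y : ℝ in atTop, (a : ℝ) * (y / I) ≤ ⌊(b : ℝ) * (y / I)⌋₊ :=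
    (tendsto_id.atTop_div_const hI).eventually (eventually_mul_le_natFloor_mul b.2 hab)
  filter_upwards [eventually_le_P_gt hI (ha0.trans hab) hb1 hZ hd, hfloor, eventually_ge_atTop 0]
    with y hP hfloor hy0 τ hτ hfa
  set L := ⌊(b : ℝ) * (y / I)⌋₊
  have hL : ((ν + L : ℕ) : ℕ∞) ≤ (ν + ⌊y / I⌋₊ : ℕ) := by
    refine Nat.cast_le.2 (Nat.add_le_add_left (Nat.floor_mono ?_) ν)
    exact mul_le_of_le_one_left (div_nonneg hy0 hI.le) (by exact_mod_cast hb1.le)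
  have hfaL : M.Pinf {ω | τ ω ≤ (ν + L : ℕ)} ≤ ENNReal.ofReal (Real.exp (-y)) :=
    (measure_mono fun ω hω => le_trans hω.out hL).trans hfa
  calc c * ENNReal.ofReal (y / I)
      = ENNReal.ofReal (a * (y / I)) * (c / a : NNReal) := by
        rw [ENNReal.ofReal_mul a.coe_nonneg, ENNReal.ofReal_coe_nnreal, mul_right_comm,
          ← ENNReal.coe_mul, mul_div_cancel₀ _ ha0.ne']
    _ ≤ L * M.P ν {ω | ((ν + L : ℕ) : ℕ∞) < τ ω} := by
        gcongr
        · exact ENNReal.ofReal_le_of_le_toReal (by simpa)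
        · exact hP τ hτ hfaL
    _ ≤ M.risk ν τ := hτ.natCast_mul_P_gt_le_risk ν L

end LowerBound

/-! ### Upper bound for the risk of the Shiryaev–Roberts procedure -/

lemma risk_SR_le {h J : ℝ} {N : ℕ} (hN : 0 < N) (hJ : 0 ≤ J) (hh : Real.log h ≤ J * N) (ν : ℕ) :
    M.risk ν (M.SR h) ≤ N + ∑' n : ℕ, ⨆ k, M.P k {ω | M.Z (k + n) k ω < J * n} := by
  refine ((M.isDetection_SR h).risk_le_natCast_add_tsum ν N).trans ?_
  gcongr _ + ?_
  refine le_trans (ENNReal.tsum_le_tsum fun n => ?_)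
    (ENNReal.tsum_comp_le_tsum_of_injective (add_left_injective N) _)
  refine le_trans (measure_mono fun ω hω => ?_) (le_iSup (fun k => M.P k _) ν)
  calc M.Z (ν + (n + N)) ν ω < Real.log h := M.Z_lt_log_of_lt_SR (by omega) hω
    _ ≤ J * N := hh
    _ ≤ J * (n + N : ℕ) := by gcongr; omega

lemma eventually_risk_SR_le {I : ℝ} (hI : 0 < I)
    (hZ : ∀ J < I, ∑' n : ℕ, ⨆ k, M.P k {ω | M.Z (k + n) k ω < J * n} ≠ ⊤)
    {c : NNReal} (hc : 1 < c) :
    ∀ᶠ y in atTop, ∀ h, Real.log h ≤ y → ∀ ν,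
      M.risk ν (M.SR h) ≤ c * ENNReal.ofReal (y / I) := by
  obtain ⟨b, hb1, hbc⟩ := exists_between hc
  have hb0 : (0 : ℝ) < b := zero_lt_one.trans hb1
  have hS := hZ (I / b) (div_lt_self hI hb1)
  set S := ∑' n : ℕ, ⨆ k, M.P k {ω | M.Z (k + n) k ω < I / b * n}
  have hceil : ∀ᶠ y : ℝ in atTop, ⌈(b : ℝ) * (y / I)⌉₊ + S.toReal ≤ c * (y / I) :=
    (tendsto_id.atTop_div_const hI).eventually (eventually_natCeil_mul_add_le_mul b.2 hbc _)
  filter_upwards [hceil, eventually_gt_atTop 0] with y hy hy0 h hh ν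
  have hlog : Real.log h ≤ I / b * ⌈(b : ℝ) * (y / I)⌉₊ := by
    calc Real.log h ≤ y := hh
      _ = I / b * (b * (y / I)) := by field_simp
      _ ≤ _ := by gcongr; exact Nat.le_ceil _
  calc M.risk ν (M.SR h) ≤ ⌈(b : ℝ) * (y / I)⌉₊ + S :=
        M.risk_SR_le (Nat.ceil_pos.2 (mul_pos hb0 (div_pos hy0 hI))) (by positivity) hlog ν
    _ = ENNReal.ofReal (⌈(b : ℝ) * (y / I)⌉₊ + S.toReal) := by
        rw [ENNReal.ofReal_add (Nat.cast_nonneg _) ENNReal.toReal_nonneg, ENNReal.ofReal_natCast,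
          ENNReal.ofReal_toReal hS]
    _ ≤ ENNReal.ofReal (c * (y / I)) := ENNReal.ofReal_le_ofReal hy
    _ = c * ENNReal.ofReal (y / I) := by
        rw [ENNReal.ofReal_mul c.coe_nonneg, ENNReal.ofReal_coe_nnreal]

end ChangePointModel

/-! ### The parameters of the class and of the procedure -/

/-- The threshold `h_β` of the Shiryaev–Roberts procedure `T_β` when the horizon `k*_β` is `k`. -/
def srThreshold (β : ℝ) (k : ℕ) : ℝ := (1 - alpha2 β k) / (rho2 β * alpha2 β k)

lemma one_add_mul_mul_one_sub_pow_le_one {ρ : ℝ} (h0 : 0 ≤ ρ) (h1 : ρ ≤ 1) (k : ℕ) :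
    (1 + k * ρ) * (1 - ρ) ^ k ≤ 1 := by
  calc (1 + k * ρ) * (1 - ρ) ^ k ≤ (1 + ρ) ^ k * (1 - ρ) ^ k := by
        have := sub_nonneg.2 h1
        gcongr
        exact one_add_mul_le_pow (by linarith) k
    _ = (1 - ρ ^ 2) ^ k := by rw [← mul_pow]; ring
    _ ≤ 1 := pow_le_one₀ (by nlinarith) (by nlinarith)

lemma exp_neg_abs_log {β : ℝ} (hβ : β ∈ Ioo 0 1) : Real.exp (-|Real.log β|) = β := by
  rw [abs_of_neg (Real.log_neg hβ.1 hβ.2), neg_neg, Real.exp_log hβ.1]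

lemma tendsto_abs_log_nhdsGT_zero : Tendsto (fun β : ℝ => |Real.log β|) (𝓝[>] 0) atTop :=
  tendsto_abs_atBot_atTop.comp Real.tendsto_log_nhdsGT_zero

lemma eventually_ofReal_abs_log_div_ne_zero {I : ℝ} (hI : 0 < I) :
    ∀ᶠ β in 𝓝[>] 0, ENNReal.ofReal (|Real.log β| / I) ≠ 0 := by
  filter_upwards [tendsto_abs_log_nhdsGT_zero.eventually_gt_atTop 0] with β hβ
  exact (ENNReal.ofReal_pos.2 (div_pos hβ hI)).ne'

lemma rho1_pos (β : ℝ) : 0 < rho1 β := by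
  unfold rho1
  positivity

lemma rho2_pos (β : ℝ) : 0 < rho2 β :=
  div_pos (rho1_pos β) (by positivity)

lemma rho2_le_rho1 (β : ℝ) : rho2 β ≤ rho1 β :=
  div_le_self (rho1_pos β).le (le_add_of_nonneg_right (abs_nonneg _))

section Parameters

variable {β : ℝ}

lemma rho1_lt_one (hβ : β ∈ Ioo 0 1) : rho1 β < 1 := by
  have hlog : 0 < |Real.log β| := abs_pos.2 (Real.log_neg hβ.1 hβ.2).ne
  rw [rho1, div_lt_one (by positivity)]
  linarith

lemma rho2_lt_one (hβ : β ∈ Ioo 0 1) : rho2 β < 1 :=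
  (rho2_le_rho1 β).trans_lt (rho1_lt_one hβ)

lemma alpha2_pos (hβ : β ∈ Ioo 0 1) (k : ℕ) : 0 < alpha2 β k :=
  mul_pos hβ.1 (pow_pos (sub_pos.2 (rho2_lt_one hβ)) k)

lemma alpha2_lt_one (hβ : β ∈ Ioo 0 1) (k : ℕ) : alpha2 β k < 1 :=
  mul_lt_one_of_nonneg_of_lt_one_left hβ.1.le hβ.2
    (pow_le_one₀ (sub_pos.2 (rho2_lt_one hβ)).le (sub_le_self _ (rho2_pos β).le))

lemma srThreshold_pos (hβ : β ∈ Ioo 0 1) (k : ℕ) : 0 < srThreshold β k :=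
  div_pos (sub_pos.2 (alpha2_lt_one hβ k)) (mul_pos (rho2_pos β) (alpha2_pos hβ k))

lemma natCast_le_srThreshold_mul (hβ : β ∈ Ioo 0 1) (k : ℕ) : k ≤ srThreshold β k * β := by
  have hα := alpha2_pos hβ k
  have hρ := rho2_pos β
  have hbern := one_add_mul_mul_one_sub_pow_le_one hρ.le (rho2_lt_one hβ).le k
  have hpow : β * (1 - rho2 β) ^ k ≤ (1 - rho2 β) ^ k :=
    mul_le_of_le_one_left (pow_nonneg (sub_nonneg.2 (rho2_lt_one hβ).le) k) hβ.2.le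
  rw [srThreshold, div_mul_eq_mul_div, le_div_iff₀ (by positivity)]
  calc (k : ℝ) * (rho2 β * alpha2 β k) = k * rho2 β * (1 - rho2 β) ^ k * β := by
        rw [alpha2]; ring
    _ ≤ (1 - alpha2 β k) * β := by
        refine mul_le_mul_of_nonneg_right ?_ hβ.1.le
        rw [alpha2]
        linarith

lemma log_srThreshold_le (hβ : β ∈ Ioo 0 1) (k : ℕ) :
    Real.log (srThreshold β k) ≤ |Real.log (alpha2 β k)| + |Real.log (rho2 β)| := by
  have hα := alpha2_pos hβ k
  have hα1 := sub_pos.2 (alpha2_lt_one hβ k)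
  have hlog : Real.log (1 - alpha2 β k) ≤ 0 := Real.log_nonpos hα1.le (sub_le_self _ hα.le)
  rw [srThreshold, Real.log_div hα1.ne' (mul_pos (rho2_pos β) hα).ne',
    Real.log_mul (rho2_pos β).ne' hα.ne']
  linarith [neg_le_abs (Real.log (alpha2 β k)), neg_le_abs (Real.log (rho2 β))]

lemma neg_inv_abs_log_le_log_one_sub_rho1 (hβ : β ∈ Ioo 0 1) :
    -|Real.log β|⁻¹ ≤ Real.log (1 - rho1 β) := by
  have hlog : 0 < |Real.log β| := abs_pos.2 (Real.log_neg hβ.1 hβ.2).ne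
  calc -|Real.log β|⁻¹ = 1 - (1 - rho1 β)⁻¹ := by
        rw [rho1, one_sub_div (by positivity), add_sub_cancel_left, inv_div]
        field_simp
        ring
    _ ≤ Real.log (1 - rho1 β) := Real.one_sub_inv_le_log_of_pos (sub_pos.2 (rho1_lt_one hβ))

lemma abs_log_alpha1_le (hβ : β ∈ Ioo 0 1) (m : ℕ) :
    |Real.log (alpha1 β m)| ≤ 1 + (m + 1) / |Real.log β| := by
  have hpow : 0 < (1 - rho1 β) ^ (m + 1) := pow_pos (sub_pos.2 (rho1_lt_one hβ)) _
  have hpow1 : (1 - rho1 β) ^ (m + 1) ≤ 1 :=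
    pow_le_one₀ (sub_pos.2 (rho1_lt_one hβ)).le (sub_le_self _ (rho1_pos β).le)
  have hnonneg : 0 ≤ (m + 1) / |Real.log β| := by positivity
  have hα : (1 - rho1 β) ^ (m + 1) ≤ alpha1 β m := le_add_of_nonneg_left hβ.1.le
  have hupper : Real.log (alpha1 β m) ≤ 1 := by
    refine (Real.log_le_sub_one_of_pos (hpow.trans_le hα)).trans ?_
    rw [alpha1]
    linarith [hβ.2]
  have hlower : -((m + 1) / |Real.log β|) ≤ Real.log (alpha1 β m) := by
    calc -((m + 1) / |Real.log β|) = (m + 1 : ℕ) * -|Real.log β|⁻¹ := by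
          push_cast
          ring
      _ ≤ (m + 1 : ℕ) * Real.log (1 - rho1 β) := by
          gcongr
          exact neg_inv_abs_log_le_log_one_sub_rho1 hβ
      _ = Real.log ((1 - rho1 β) ^ (m + 1)) := (Real.log_pow _ _).symm
      _ ≤ Real.log (alpha1 β m) := Real.log_le_log hpow hα
  exact abs_le.2 ⟨by linarith, by linarith⟩

lemma abs_log_rho2_le (hβ : 2 ≤ |Real.log β|) :
    |Real.log (rho2 β)| ≤ 4 * Real.log |Real.log β| := by
  set l := |Real.log β| with hl
  have hlog0 : 0 ≤ Real.log l := Real.log_nonneg (by linarith)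
  have hlog : Real.log l ≤ l := Real.log_le_self (by linarith)
  have hrho : rho2 β = ((1 + l) * (1 + Real.log l))⁻¹ := by
    rw [rho2, rho1, ← hl, abs_of_nonneg hlog0, div_div, one_div]
  have hone : 1 ≤ (1 + l) * (1 + Real.log l) := by nlinarith
  rw [hrho, Real.log_inv, abs_neg, abs_of_nonneg (Real.log_nonneg hone)]
  calc Real.log ((1 + l) * (1 + Real.log l)) ≤ Real.log (l ^ 4) := by
        refine Real.log_le_log (by linarith) ?_
        calc (1 + l) * (1 + Real.log l) ≤ l ^ 2 * l ^ 2 := by gcongr <;> nlinarith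
          _ = l ^ 4 := by ring
    _ = 4 * Real.log l := by rw [Real.log_pow]; norm_cast

end Parameters

lemma tendsto_log_rho2_div :
    Tendsto (fun β => |Real.log (rho2 β)| / |Real.log β|) (𝓝[>] 0) (𝓝 0) := by
  have hlim : Tendsto (fun β => 4 * (Real.log |Real.log β| / |Real.log β|)) (𝓝[>] 0) (𝓝 0) := by
    have := (Real.isLittleO_log_id_atTop.tendsto_div_nhds_zero.comp
      tendsto_abs_log_nhdsGT_zero).const_mul 4
    rwa [mul_zero] at this
  refine squeeze_zero' (.of_forall fun β => by positivity) ?_ hlim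
  filter_upwards [tendsto_abs_log_nhdsGT_zero.eventually_ge_atTop 2] with β hβ
  rw [← mul_div_assoc]
  gcongr
  exact abs_log_rho2_le hβ

lemma tendsto_div_abs_log_atTop_of_alpha1 {mstar : ℝ → ℕ}
    (hH1 : Tendsto (fun β => |Real.log (alpha1 β (mstar β))| / |Real.log β|) (𝓝[>] 0) (𝓝 1)) :
    Tendsto (fun β => mstar β / |Real.log β|) (𝓝[>] 0) atTop := by
  have hα : Tendsto (fun β => |Real.log (alpha1 β (mstar β))| / |Real.log β| * |Real.log β| - 2)
      (𝓝[>] 0) atTop :=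
    tendsto_atTop_add_const_right _ _
      (hH1.pos_mul_atTop one_pos tendsto_abs_log_nhdsGT_zero)
  refine tendsto_atTop_mono' _ ?_ hα
  filter_upwards [Ioo_mem_nhdsGT one_pos, tendsto_abs_log_nhdsGT_zero.eventually_ge_atTop 1]
    with β hβ hlog
  have hle := abs_log_alpha1_le hβ (mstar β)
  have hinv : 1 / |Real.log β| ≤ 1 := (div_le_one (by linarith)).2 hlog
  rw [div_mul_cancel₀ _ (by linarith)]
  rw [add_div] at hle
  linarith

lemma eventually_log_srThreshold_le {kstar : ℝ → ℕ}
    (hH2 : Tendsto (fun β => |Real.log (alpha2 β (kstar β))| / |Real.log β|) (𝓝[>] 0) (𝓝 1))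
    {a : ℝ} (ha : 1 < a) :
    ∀ᶠ β in 𝓝[>] 0, Real.log (srThreshold β (kstar β)) ≤ a * |Real.log β| := by
  have hlim := hH2.add tendsto_log_rho2_div
  rw [add_zero] at hlim
  filter_upwards [hlim.eventually_le_const ha, Ioo_mem_nhdsGT one_pos,
    tendsto_abs_log_nhdsGT_zero.eventually_gt_atTop 0] with β hle hβ hlog
  rw [← add_div, div_le_iff₀ hlog] at hle
  exact (log_srThreshold_le hβ _).trans hle

/-! ### Asymptotic optimality -/

namespace ChangePointModel

variable {Ω : Type} [m0 : MeasurableSpace Ω] {M : ChangePointModel Ω}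

lemma Pinf_le_le_of_mem_Hclass {β : ℝ} {k m n : ℕ} {τ : Ω → ℕ∞} (hτ : τ ∈ M.Hclass β k m)
    (hmk : m < k) (hnm : n ≤ m) : M.Pinf {ω | τ ω ≤ n} ≤ ENNReal.ofReal β := by
  have hlt : (n : ℕ∞) < ((1 + m : ℕ) : ℕ∞) := by exact_mod_cast (by omega : n < 1 + m)
  have hsub : {ω | τ ω ≤ n} ⊆ {ω | ((1 : ℕ) : ℕ∞) ≤ τ ω ∧ τ ω < ((1 + m : ℕ) : ℕ∞)} :=
    fun ω hω => ⟨hτ.1.1 ω, hω.out.trans_lt hlt⟩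
  exact (measure_mono hsub).trans (hτ.2 1 le_rfl (by omega))

section Asymptotics

variable {mstar kstar : ℝ → ℕ} {I : ℝ}

/-- Since `m* / |log β| → ∞`, the first window of the false-alarm constraint eventually covers the
times up to `ν + |log β| / I`, where the lower bound takes place. -/
lemma eventually_mul_le_iInf_risk (hk : ∀ β ∈ Ioo (0 : ℝ) 1, mstar β < kstar β)
    (hm : Tendsto (fun β => mstar β / |Real.log β|) (𝓝[>] 0) atTop)
    (hI : 0 < I) (hA2 : M.CondA2 I) (ν : ℕ) {c : NNReal} (hc : c < 1) :
    ∀ᶠ β in 𝓝[>] 0, c * ENNReal.ofReal (|Real.log β| / I)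
      ≤ ⨅ τ ∈ M.Hclass β (kstar β) (mstar β), M.risk ν τ := by
  have hrisk := tendsto_abs_log_nhdsGT_zero.eventually
    (eventually_mul_le_risk hI (fun J hJ => hA2.tendsto_P_lt_Z hJ ν) hc)
  filter_upwards [hrisk, hm.eventually_ge_atTop (ν + 1 / I), Ioo_mem_nhdsGT one_pos,
    tendsto_abs_log_nhdsGT_zero.eventually_ge_atTop 1] with β hrisk hm hβ hlog
  have hwindow : ν + ⌊|Real.log β| / I⌋₊ ≤ mstar β := by
    rw [add_comm, ← Nat.floor_add_natCast (by positivity)]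
    refine Nat.floor_le_of_le ?_
    rw [le_div_iff₀ (by linarith)] at hm
    calc |Real.log β| / I + ν ≤ |Real.log β| / I + ν * |Real.log β| := by
          gcongr
          exact le_mul_of_one_le_right ν.cast_nonneg hlog
      _ = (ν + 1 / I) * |Real.log β| := by ring
      _ ≤ mstar β := hm
  refine le_iInf₂ fun τ hτ => hrisk τ hτ.1 ?_
  rw [exp_neg_abs_log hβ]
  exact Pinf_le_le_of_mem_Hclass hτ (hk β hβ) hwindow

lemma eventually_iSup_risk_SR_le
    (hH2 : Tendsto (fun β => |Real.log (alpha2 β (kstar β))| / |Real.log β|) (𝓝[>] 0) (𝓝 1))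
    (hI : 0 < I) (hA2 : M.CondA2 I) {c : NNReal} (hc : 1 < c) :
    ∀ᶠ β in 𝓝[>] 0, ⨆ ν, M.risk ν (M.SR (srThreshold β (kstar β)))
      ≤ c * ENNReal.ofReal (|Real.log β| / I) := by
  obtain ⟨a, ha, hac⟩ := exists_between hc
  have ha0 : 0 < a := zero_lt_one.trans ha
  have hrisk := (tendsto_abs_log_nhdsGT_zero.const_mul_atTop (NNReal.coe_pos.2 ha0)).eventually
    (M.eventually_risk_SR_le hI (fun J => hA2.tsum_iSup_P_Z_lt_ne_top) ((one_lt_div ha0).2 hac))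
  filter_upwards [hrisk, eventually_log_srThreshold_le hH2 ha] with β hrisk hlog
  refine iSup_le fun ν => (hrisk _ hlog ν).trans_eq ?_
  rw [mul_div_assoc, ENNReal.ofReal_mul a.coe_nonneg, ENNReal.ofReal_coe_nnreal, ← mul_assoc,
    ← ENNReal.coe_mul, div_mul_cancel₀ _ ha0.ne']

lemma tendsto_div_abs_log_one_of_le_of_le (hk : ∀ β ∈ Ioo (0 : ℝ) 1, mstar β < kstar β)
    (hH1 : Tendsto (fun β => |Real.log (alpha1 β (mstar β))| / |Real.log β|) (𝓝[>] 0) (𝓝 1))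
    (hH2 : Tendsto (fun β => |Real.log (alpha2 β (kstar β))| / |Real.log β|) (𝓝[>] 0) (𝓝 1))
    (hI : 0 < I) (hA2 : M.CondA2 I) {f : ℝ → ℝ≥0∞} (ν : ℕ)
    (hlow : ∀ᶠ β in 𝓝[>] 0, ⨅ τ ∈ M.Hclass β (kstar β) (mstar β), M.risk ν τ ≤ f β)
    (hup : ∀ᶠ β in 𝓝[>] 0, f β ≤ ⨆ ν, M.risk ν (M.SR (srThreshold β (kstar β)))) :
    Tendsto (fun β => f β / ENNReal.ofReal (|Real.log β| / I)) (𝓝[>] 0) (𝓝 1) := by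
  refine tendsto_div_one_of_forall_mul_le (eventually_ofReal_abs_log_div_ne_zero hI)
    (.of_forall fun _ => ofReal_ne_top) (fun c hc => ?_) fun c hc => ?_
  · filter_upwards [hlow, eventually_mul_le_iInf_risk hk
      (tendsto_div_abs_log_atTop_of_alpha1 hH1) hI hA2 ν hc] with β hle hβ
    exact hβ.trans hle
  · filter_upwards [hup, eventually_iSup_risk_SR_le hH2 hI hA2 hc] with β hle hβ
    exact hle.trans hβ

end Asymptotics

lemma SR_srThreshold_mem_Hclass (M : ChangePointModel Ω) {β : ℝ} (hβ : β ∈ Ioo 0 1) (k m : ℕ) :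
    M.SR (srThreshold β k) ∈ M.Hclass β k m :=
  M.SR_mem_Hclass (srThreshold_pos hβ k) (natCast_le_srThreshold_mul hβ k) m

end ChangePointModel

/-- Under (H1) and (H2), for every `0 < β < 1` the SR procedure `T_β` with
threshold `h_β = (1-α₂(β,k*_β))/(ϱ_{2,β} α₂(β,k*_β))` belongs to `H(β,k*_β,m*_β)`; and if in
addition (A2) holds with limit `I ∈ (0,∞)`, then `T_β` is first-order asymptotically
uniformly pointwise optimal and minimax in `H(β,k*_β,m*_β)`, all the optimal risks and the
risks of `T_β` being asymptotically equivalent to `|log β|/I` as `β → 0`. -/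
theorem statement6
    {Ω : Type} [m0 : MeasurableSpace Ω] (M : ChangePointModel Ω)
    (mstar kstar : ℝ → ℕ)
    (hm1 : ∀ β ∈ Set.Ioo (0 : ℝ) 1, 1 ≤ mstar β)
    (hk : ∀ β ∈ Set.Ioo (0 : ℝ) 1, mstar β < kstar β)
    (hH1 : Tendsto (fun β : ℝ => |Real.log (alpha1 β (mstar β))| / |Real.log β|)
      (𝓝[>] (0 : ℝ)) (𝓝 1))
    (hH2 : Tendsto (fun β : ℝ => |Real.log (alpha2 β (kstar β))| / |Real.log β|)
      (𝓝[>] (0 : ℝ)) (𝓝 1))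
    (I : ℝ) (hI : 0 < I) :
    (∀ β ∈ Set.Ioo (0 : ℝ) 1,
      M.SR ((1 - alpha2 β (kstar β)) / (rho2 β * alpha2 β (kstar β)))
        ∈ M.Hclass β (kstar β) (mstar β)) ∧
    (M.CondA2 I →
      (∀ ν : ℕ,
        Tendsto (fun β : ℝ =>
          (⨅ τ ∈ M.Hclass β (kstar β) (mstar β), M.risk ν τ)
            / M.risk ν (M.SR ((1 - alpha2 β (kstar β)) / (rho2 β * alpha2 β (kstar β)))))
          (𝓝[>] (0 : ℝ)) (𝓝 1)) ∧
      (Tendsto (fun β : ℝ =>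
          (⨅ τ ∈ M.Hclass β (kstar β) (mstar β), ⨆ ν : ℕ, M.risk ν τ)
            / (⨆ ν : ℕ,
                M.risk ν (M.SR ((1 - alpha2 β (kstar β)) / (rho2 β * alpha2 β (kstar β))))))
          (𝓝[>] (0 : ℝ)) (𝓝 1)) ∧
      (∀ ν : ℕ,
        Tendsto (fun β : ℝ =>
          M.risk ν (M.SR ((1 - alpha2 β (kstar β)) / (rho2 β * alpha2 β (kstar β))))
            / ENNReal.ofReal (|Real.log β| / I))
          (𝓝[>] (0 : ℝ)) (𝓝 1)) ∧
      (∀ ν : ℕ,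
        Tendsto (fun β : ℝ =>
          (⨅ τ ∈ M.Hclass β (kstar β) (mstar β), M.risk ν τ)
            / ENNReal.ofReal (|Real.log β| / I))
          (𝓝[>] (0 : ℝ)) (𝓝 1)) ∧
      (Tendsto (fun β : ℝ =>
          (⨆ ν : ℕ,
              M.risk ν (M.SR ((1 - alpha2 β (kstar β)) / (rho2 β * alpha2 β (kstar β)))))
            / ENNReal.ofReal (|Real.log β| / I))
          (𝓝[>] (0 : ℝ)) (𝓝 1)) ∧
      (Tendsto (fun β : ℝ =>
          (⨅ τ ∈ M.Hclass β (kstar β) (mstar β), ⨆ ν : ℕ, M.risk ν τ)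
            / ENNReal.ofReal (|Real.log β| / I))
          (𝓝[>] (0 : ℝ)) (𝓝 1))) := by
  have hmem (β) (hβ : β ∈ Ioo 0 1) := M.SR_srThreshold_mem_Hclass hβ (kstar β) (mstar β)
  refine ⟨hmem, fun hA2 => ?_⟩
  have hmem0 := eventually_of_mem (Ioo_mem_nhdsGT one_pos) hmem
  have squeeze (f : ℝ → ℝ≥0∞) (ν : ℕ) :=
    M.tendsto_div_abs_log_one_of_le_of_le hk hH1 hH2 hI hA2 (f := f) ν
  have hriskSR (ν : ℕ) := squeeze (fun β => M.risk ν (M.SR (srThreshold β (kstar β)))) ν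
    (hmem0.mono fun β hβ => iInf₂_le _ hβ)
    (.of_forall fun β => le_iSup (M.risk · _) ν)
  have hrisk (ν : ℕ) := squeeze (fun β => ⨅ τ ∈ M.Hclass β (kstar β) (mstar β), M.risk ν τ) ν
    (.of_forall fun β => le_rfl)
    (hmem0.mono fun β hβ => (iInf₂_le _ hβ).trans (le_iSup (M.risk · _) ν))
  have hsupSR := squeeze (fun β => ⨆ ν, M.risk ν (M.SR (srThreshold β (kstar β)))) 0
    (hmem0.mono fun β hβ => (iInf₂_le _ hβ).trans (le_iSup (M.risk · _) 0))
    (.of_forall fun β => le_rfl)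
  have hsup := squeeze (fun β => ⨅ τ ∈ M.Hclass β (kstar β) (mstar β), ⨆ ν, M.risk ν τ) 0
    (.of_forall fun β => iInf₂_mono fun τ _ => le_iSup (M.risk · τ) 0)
    (hmem0.mono fun β hβ => iInf₂_le _ hβ)
  have hlog0 := eventually_ofReal_abs_log_div_ne_zero hI
  have hlogtop := Eventually.of_forall (f := 𝓝[>] 0) fun β => ofReal_ne_top (r := |Real.log β| / I)
  exact ⟨fun ν => tendsto_div_one_trans hlog0 hlogtop (hrisk ν) (hriskSR ν),
    tendsto_div_one_trans hlog0 hlogtop hsup hsupSR, hriskSR, hrisk, hsupSR, hsup⟩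
end
end

section
/- Assume conditions (B1) and (B2) hold. Then for any x ∈ X and any real r ≥ 2 for which υ*_r(x) < ∞ and g*_r(x) < ∞, one has for every n ≥ 2: E_x|W̃_n(g)|^r ≤ W*_r · (1 + υ*_r(x) + g*_r(x)) / n^{r/2}. -/
/-!
The centred sum splits as `n W̃_n = A + B`, where `A = ∑ (g(X_{i+1}, X_i) - g̃(X_i))` is a
martingale and `B = ∑ (g̃(X_i) - λ(g̃))` is an additive functional of the chain. Both are handled by
one inequality of Rio: if `Y_i` is adapted to `ℱ_i` and `Y_j E[Y_j + ⋯ + Y_{l-1} | ℱ_j] ≤ H_j²` for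
all `j < l`, with `E |H_j|^r ≤ η`, then `E |∑_{i<n} Y_i|^r ≤ (2 (r-1) n)^{r/2} η`.

Rio's inequality comes from an integral inequality for the interpolated moment
`φ(n + t) = E |S_n + t Y_n|^r`, `0 ≤ t ≤ 1`. The subgradient inequality for `|·|^r`, with its
first-order terms telescoped and conditioned on the past, bounds `φ` by
`r (r-1) ∫ E[|S + s Y|^{r-2} H²] ds`; Hölder's inequality turns this into
`φ(u) ≤ r (r-1) η^{2/r} ∫_0^u φ^{1-2/r}`, and a Bihari–Gronwall argument integrates it, one unit
interval at a time.

For `A` the conditional expectations vanish and `H_i = Y_i`. For `B` the Markov property identifies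
`E[Y_i | ℱ_j]` with the integral of `g̃ - λ(g̃)` under the `(i-j)`-step kernel at `X_j`, which
geometric ergodicity bounds by `2 R V(X_j) e^{-κ(i-j)}`; summing the geometric series gives
`H_j = 2 R √(e^κ / (e^κ - 1)) V(X_j)`. The hypothesis covers only functions with `0 < f ≤ V`;
splitting into positive and negative parts costs the factor `2`.

The two bounds are combined by convexity with weights `1/4` and `3/4`, and
`((r-1)/r)^{r/2} ≤ e^{-1/2}` makes the constants fit.
-/

open MeasureTheory ProbabilityTheory Filter Set ENNReal

noncomputable section

/-- A time-homogeneous Markov chain on a measurable space `𝒳`: a Markov transition kernel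
`K` together with, for every starting point `x`, the law `law x` (on the path space
`ℕ → 𝒳`) of the chain started at `x`, characterized by `X 0 = x` a.s. and the Markov
property with transition kernel `K`. -/
structure MarkovChain (𝒳 : Type) [MeasurableSpace 𝒳] where
  K : Kernel 𝒳 𝒳
  isMarkov : IsMarkovKernel K
  law : 𝒳 → Measure (ℕ → 𝒳)
  law_prob : ∀ x, IsProbabilityMeasure (law x)
  law_zero : ∀ x, law x {ω | ω 0 = x} = 1
  law_markov : ∀ (x : 𝒳) (n : ℕ) (A : Set 𝒳), MeasurableSet A →
    ∀ B : Set (ℕ → 𝒳),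
      MeasurableSet[MeasurableSpace.comap
        (fun (ω : ℕ → 𝒳) (i : Fin (n + 1)) => ω i) inferInstance] B →
      law x ({ω | ω (n + 1) ∈ A} ∩ B) = ∫⁻ ω in B, K (ω n) A ∂(law x)

namespace MarkovChain

variable {𝒳 : Type} [MeasurableSpace 𝒳] (M : MarkovChain 𝒳)

/-- `g̃(u) = ∫ g(v,u) P(u,dv)`. -/
def gtilde (g : 𝒳 → 𝒳 → ℝ) (u : 𝒳) : ℝ := ∫ v, g v u ∂(M.K u)

/-- `υ*_r(x) = sup_{n ≥ 0} E_x V(X_n)^r`. -/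
def upsStar (V : 𝒳 → ℝ) (r : ℝ) (x : 𝒳) : ℝ≥0∞ :=
  ⨆ n : ℕ, ∫⁻ ω, ENNReal.ofReal (V (ω n) ^ r) ∂(M.law x)

/-- `g*_r(x) = sup_{j ≥ 1} E_x |g(X_j, X_{j-1})|^r`. -/
def gStar (g : 𝒳 → 𝒳 → ℝ) (r : ℝ) (x : 𝒳) : ℝ≥0∞ :=
  ⨆ j : ℕ, ∫⁻ ω, ENNReal.ofReal (|g (ω (j + 1)) (ω j)| ^ r) ∂(M.law x)

end MarkovChain

/-! ### Powers, subgradients and a Bihari inequality -/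

/-- `x ↦ |x|^(r-2) x`, which is the derivative of `|x|^r` up to the factor `r`. -/
def signedPow (r x : ℝ) : ℝ := |x| ^ (r - 2) * x

/-- `∫₀ᵗ |x + s y|^(r-2) ds`, the second derivative of `|·|^r` integrated along the segment from
`x` to `x + t y`, up to the factor `r (r - 1)`. -/
def segmentIntegral (r x y t : ℝ) : ℝ := ∫ s in (0 : ℝ)..t, |x + s * y| ^ (r - 2)

lemma continuous_abs_rpow {p : ℝ} (hp : 0 ≤ p) : Continuous fun x : ℝ => |x| ^ p :=
  continuous_abs.rpow_const fun _ => Or.inr hp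

lemma continuous_signedPow {r : ℝ} (hr : 2 ≤ r) : Continuous (signedPow r) :=
  (continuous_abs_rpow (by linarith)).mul continuous_id

lemma hasDerivAt_signedPow {r : ℝ} (hr : 2 ≤ r) (x : ℝ) :
    HasDerivAt (signedPow r) ((r - 1) * |x| ^ (r - 2)) x := by
  have hasDerivAt_of_ne (y : ℝ) (hy : y ≠ 0) :
      HasDerivAt (signedPow r) ((r - 1) * |y| ^ (r - 2)) y := by
    refine (((hasDerivAt_abs hy).rpow_const (Or.inl (abs_ne_zero.2 hy))).mul
      (hasDerivAt_id y)).congr_deriv ?_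
    calc (SignType.sign y : ℝ) * (r - 2) * |y| ^ (r - 2 - 1) * y + |y| ^ (r - 2) * 1
        = (r - 2) * (|y| ^ (r - 2 - 1) * (SignType.sign y * y)) + |y| ^ (r - 2) := by ring
      _ = (r - 2) * |y| ^ (r - 2) + |y| ^ (r - 2) := by
        rw [sign_mul_self, ← Real.rpow_add_one (abs_ne_zero.2 hy), sub_add_cancel]
      _ = (r - 1) * |y| ^ (r - 2) := by ring
  exact hasDerivAt_of_hasDerivAt_of_ne' hasDerivAt_of_ne (continuous_signedPow hr).continuousAt
    (continuous_const.mul (continuous_abs_rpow (by linarith))).continuousAt x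

lemma signedPow_sub {r : ℝ} (hr : 2 ≤ r) (x y t : ℝ) :
    signedPow r (x + t * y) - signedPow r x = (r - 1) * y * segmentIntegral r x y t := by
  have hderiv (s : ℝ) : HasDerivAt (fun s => signedPow r (x + s * y))
      ((r - 1) * |x + s * y| ^ (r - 2) * y) s :=
    HasDerivAt.comp (h₂ := signedPow r) s (hasDerivAt_signedPow hr (x + s * y))
      ((hasDerivAt_mul_const y).const_add x)
  have hcont : Continuous fun s : ℝ => (r - 1) * |x + s * y| ^ (r - 2) * y :=
    (continuous_const.mul ((continuous_abs_rpow (by linarith)).comp (by fun_prop))).mul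
      continuous_const
  have hftc := intervalIntegral.integral_eq_sub_of_hasDerivAt (fun s _ => hderiv s)
    (hcont.intervalIntegrable 0 t)
  rw [zero_mul, add_zero] at hftc
  rw [← hftc, segmentIntegral, intervalIntegral.integral_mul_const,
    intervalIntegral.integral_const_mul]
  ring

lemma segmentIntegral_nonneg {r x y t : ℝ} (ht : 0 ≤ t) : 0 ≤ segmentIntegral r x y t :=
  intervalIntegral.integral_nonneg ht fun _ _ => by positivity

lemma convexOn_abs_rpow {r : ℝ} (hr : 1 ≤ r) : ConvexOn ℝ univ fun x : ℝ => |x| ^ r := by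
  have himage : norm '' (univ : Set ℝ) ⊆ Ici 0 := by
    rintro _ ⟨x, -, rfl⟩
    exact norm_nonneg x
  have hconvex : Convex ℝ (norm '' (univ : Set ℝ)) :=
    (isPreconnected_univ.image _ continuous_norm.continuousOn).ordConnected.convex
  exact ((convexOn_rpow hr).subset himage hconvex).comp convexOn_univ_norm
    ((Real.monotoneOn_rpow_Ici_of_exponent_nonneg (by linarith)).mono himage)

lemma abs_rpow_sub_le_mul_signedPow {r : ℝ} (hr : 1 < r) (a b : ℝ) :
    |b| ^ r - |a| ^ r ≤ r * signedPow r b * (b - a) := by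
  have hconvex := convexOn_abs_rpow hr.le
  have hderiv : HasDerivAt (fun x : ℝ => |x| ^ r) (r * signedPow r b) b := by
    simpa only [signedPow, mul_assoc] using hasDerivAt_abs_rpow b hr
  rcases lt_trichotomy a b with hab | rfl | hba
  · have := hconvex.slope_le_of_hasDerivAt (mem_univ a) (mem_univ b) hab hderiv
    rwa [slope_def_field, div_le_iff₀ (sub_pos.2 hab)] at this
  · simp
  · have := hconvex.le_slope_of_hasDerivAt (mem_univ b) (mem_univ a) hba hderiv
    rw [slope_def_field, le_div_iff₀ (sub_pos.2 hba)] at this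
    linarith

/-- Telescoping the first-order terms as well expresses `f w` through increments of the
subgradient `ψ` only. -/
lemma le_add_sum_sub_mul_of_subgradient {f ψ : ℝ → ℝ} (hψ : ∀ a b, f b - f a ≤ ψ b * (b - a))
    (s : ℕ → ℝ) (n : ℕ) (w : ℝ) :
    f w ≤ f (s 0) + ψ (s 0) * (w - s 0)
      + ∑ j ∈ Finset.range n, (ψ (s (j + 1)) - ψ (s j)) * (w - s j)
      + (ψ w - ψ (s n)) * (w - s n) := by
  induction n generalizing w with
  | zero =>
    rw [Finset.sum_range_zero]
    linarith [hψ (s 0) w]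
  | succ n ih =>
    have hsplit : ∑ j ∈ Finset.range (n + 1), (ψ (s (j + 1)) - ψ (s j)) * (w - s j)
        = ∑ j ∈ Finset.range (n + 1), (ψ (s (j + 1)) - ψ (s j)) * (s (n + 1) - s j)
          + (ψ (s (n + 1)) - ψ (s 0)) * (w - s (n + 1)) := by
      rw [← Finset.sum_range_sub (fun j => ψ (s j)), Finset.sum_mul, ← Finset.sum_add_distrib]
      exact Finset.sum_congr rfl fun _ _ => by ring
    have hlast := hψ (s (n + 1)) w
    have hprev := ih (s (n + 1))
    rw [add_assoc, ← Finset.sum_range_succ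
      (fun j => (ψ (s (j + 1)) - ψ (s j)) * (s (n + 1) - s j))] at hprev
    rw [hsplit]
    linarith

lemma abs_rpow_le_sum_signedPow_sub_mul {r : ℝ} (hr : 1 < r) {s : ℕ → ℝ} (hs : s 0 = 0)
    (n : ℕ) (w : ℝ) :
    |w| ^ r ≤ r * (∑ j ∈ Finset.range n,
        (signedPow r (s (j + 1)) - signedPow r (s j)) * (w - s j)
      + (signedPow r w - signedPow r (s n)) * (w - s n)) := by
  have h := le_add_sum_sub_mul_of_subgradient (abs_rpow_sub_le_mul_signedPow hr) s n w
  have hsum : ∑ j ∈ Finset.range n,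
        (r * signedPow r (s (j + 1)) - r * signedPow r (s j)) * (w - s j)
      = r * ∑ j ∈ Finset.range n,
        (signedPow r (s (j + 1)) - signedPow r (s j)) * (w - s j) := by
    rw [Finset.mul_sum]
    exact Finset.sum_congr rfl fun _ _ => by ring
  have h0 : |s 0| ^ r = 0 := by rw [hs, abs_zero, Real.zero_rpow (by linarith)]
  have hψ0 : signedPow r (s 0) = 0 := by rw [hs, signedPow, mul_zero]
  rw [hsum, h0, hψ0] at h
  linarith

section Bihari

variable {α a C T : ℝ}

lemma continuousOn_primitive_Icc {φ : ℝ → ℝ} (hT : 0 ≤ T) (hφ : ContinuousOn φ (Icc 0 T)) :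
    ContinuousOn (fun s => ∫ u in (0 : ℝ)..s, φ u) (Icc 0 T) := by
  rw [← uIcc_of_le hT] at hφ ⊢
  exact intervalIntegral.continuousOn_primitive_interval hφ.integrableOn_uIcc

lemma hasDerivAt_primitive_Ioo {φ : ℝ → ℝ} (hφ : ContinuousOn φ (Icc 0 T)) {s : ℝ}
    (hs : s ∈ Ioo 0 T) : HasDerivAt (fun s => ∫ u in (0 : ℝ)..s, φ u) (φ s) s := by
  refine intervalIntegral.integral_hasDerivAt_right ?_
    ((hφ.mono Ioo_subset_Icc_self).stronglyMeasurableAtFilter isOpen_Ioo s hs)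
    (hφ.continuousAt (Icc_mem_nhds hs.1 hs.2))
  refine (hφ.mono ?_).intervalIntegrable
  rw [uIcc_of_le hs.1.le]
  exact Icc_subset_Icc le_rfl hs.2.le

lemma rpow_add_integral_rpow_le_of_pos {f : ℝ → ℝ} (hα0 : 0 ≤ α) (hα1 : α < 1) (ha : 0 < a)
    (hC : 0 ≤ C) (hT : 0 ≤ T) (hf : ContinuousOn f (Icc 0 T)) (hf0 : ∀ s, 0 ≤ f s)
    (h : ∀ s ∈ Icc 0 T, f s ≤ a + C * ∫ u in (0 : ℝ)..s, f u ^ α) :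
    (a + C * ∫ u in (0 : ℝ)..T, f u ^ α) ^ (1 - α) ≤ a ^ (1 - α) + (1 - α) * C * T := by
  set F : ℝ → ℝ := fun s => a + C * ∫ u in (0 : ℝ)..s, f u ^ α with hF
  have hfα : ContinuousOn (fun u => f u ^ α) (Icc 0 T) := hf.rpow_const fun _ _ => Or.inr hα0
  have hpos (s : ℝ) (hs : 0 ≤ s) : 0 < F s := by
    have : 0 ≤ ∫ u in (0 : ℝ)..s, f u ^ α :=
      intervalIntegral.integral_nonneg hs fun u _ => Real.rpow_nonneg (hf0 u) α
    positivity
  have hcont : ContinuousOn (fun s => F s ^ (1 - α)) (Icc 0 T) :=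
    (continuousOn_const.add (continuousOn_const.mul (continuousOn_primitive_Icc hT hfα))).rpow_const
      fun s hs => Or.inl (hpos s hs.1).ne'
  have hderiv (s : ℝ) (hs : s ∈ Ioo 0 T) :
      HasDerivAt (fun s => F s ^ (1 - α)) (C * f s ^ α * (1 - α) * F s ^ (1 - α - 1)) s :=
    (((hasDerivAt_primitive_Ioo hfα hs).const_mul C).const_add a).rpow_const
      (Or.inl (hpos s hs.1.le).ne')
  have hderiv_le (s : ℝ) (hs : s ∈ Ioo 0 T) :
      C * f s ^ α * (1 - α) * F s ^ (1 - α - 1) ≤ (1 - α) * C := by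
    have hFs := hpos s hs.1.le
    have : 0 ≤ 1 - α := by linarith
    calc C * f s ^ α * (1 - α) * F s ^ (1 - α - 1)
        ≤ C * F s ^ α * (1 - α) * F s ^ (1 - α - 1) := by
          gcongr
          exacts [hf0 s, h s (Ioo_subset_Icc_self hs)]
      _ = (1 - α) * C * (F s ^ α * F s ^ (1 - α - 1)) := by ring
      _ = (1 - α) * C := by rw [← Real.rpow_add hFs]; simp
  have hmv := (convex_Icc 0 T).image_sub_le_mul_sub_of_deriv_le hcont
    (fun s hs => (hderiv s (by rwa [interior_Icc] at hs)).differentiableAt.differentiableWithinAt)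
    (fun s hs => by
      rw [interior_Icc] at hs
      exact (hderiv s hs).deriv.trans_le (hderiv_le s hs))
    0 ⟨le_rfl, hT⟩ T ⟨hT, le_rfl⟩ hT
  have hF0 : F 0 = a := by simp [hF]
  rw [hF0, sub_zero] at hmv
  linarith

lemma rpow_add_integral_rpow_le {f : ℝ → ℝ} (hα0 : 0 ≤ α) (hα1 : α < 1) (ha : 0 ≤ a)
    (hC : 0 ≤ C) (hT : 0 ≤ T) (hf : ContinuousOn f (Icc 0 T)) (hf0 : ∀ s, 0 ≤ f s)
    (h : ∀ s ∈ Icc 0 T, f s ≤ a + C * ∫ u in (0 : ℝ)..s, f u ^ α) :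
    (a + C * ∫ u in (0 : ℝ)..T, f u ^ α) ^ (1 - α) ≤ a ^ (1 - α) + (1 - α) * C * T := by
  have hcont (b : ℝ) : Continuous fun ε : ℝ => (a + ε + b) ^ (1 - α) :=
    (by fun_prop : Continuous fun ε : ℝ => a + ε + b).rpow_const fun _ => Or.inr (by linarith)
  have hperturbed : ∀ᶠ ε : ℝ in nhdsWithin 0 (Ioi 0),
      (a + ε + C * ∫ u in (0 : ℝ)..T, f u ^ α) ^ (1 - α)
        ≤ (a + ε + 0) ^ (1 - α) + (1 - α) * C * T := by
    filter_upwards [self_mem_nhdsWithin] with ε hε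
    have hε : 0 < ε := hε
    rw [add_zero]
    exact rpow_add_integral_rpow_le_of_pos hα0 hα1 (by linarith) hC hT hf hf0
      fun s hs => by linarith [h s hs]
  have hlim := le_of_tendsto_of_tendsto (((hcont _).tendsto 0).mono_left nhdsWithin_le_nhds)
    ((((hcont 0).add continuous_const).tendsto 0).mono_left nhdsWithin_le_nhds) hperturbed
  simpa only [Pi.add_apply, add_zero] using hlim

/-- The functions `m 0, m 1, …` are the restrictions to consecutive unit intervals of a single
function on the half-line. -/
lemma rpow_sum_integral_rpow_le {m : ℕ → ℝ → ℝ} (hα0 : 0 ≤ α) (hα1 : α < 1) (hC : 0 ≤ C)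
    (hm : ∀ n, ContinuousOn (m n) (Icc 0 1)) (hm0 : ∀ n s, 0 ≤ m n s)
    (h : ∀ n, ∀ s ∈ Icc (0 : ℝ) 1, m n s ≤ C * ∑ j ∈ Finset.range n, (∫ u in (0 : ℝ)..1, m j u ^ α)
      + C * ∫ u in (0 : ℝ)..s, m n u ^ α) (n : ℕ) :
    (C * ∑ j ∈ Finset.range n, ∫ u in (0 : ℝ)..1, m j u ^ α) ^ (1 - α) ≤ n * ((1 - α) * C) := by
  induction n with
  | zero => simp [Real.zero_rpow (by linarith : 1 - α ≠ 0)]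
  | succ n ih =>
    have hsum : 0 ≤ ∑ j ∈ Finset.range n, ∫ u in (0 : ℝ)..1, m j u ^ α :=
      Finset.sum_nonneg fun j _ =>
        intervalIntegral.integral_nonneg zero_le_one fun u _ => Real.rpow_nonneg (hm0 j u) α
    have hstep := rpow_add_integral_rpow_le hα0 hα1 (mul_nonneg hC hsum) hC zero_le_one (hm n)
      (hm0 n) (h n)
    rw [Finset.sum_range_succ, mul_add]
    push_cast
    linarith

lemma le_rpow_of_le_sum_integral_rpow {m : ℕ → ℝ → ℝ} (hα0 : 0 ≤ α) (hα1 : α < 1) (hC : 0 ≤ C)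
    (hm : ∀ n, ContinuousOn (m n) (Icc 0 1)) (hm0 : ∀ n s, 0 ≤ m n s)
    (h : ∀ n, ∀ s ∈ Icc (0 : ℝ) 1, m n s ≤ C * ∑ j ∈ Finset.range n, (∫ u in (0 : ℝ)..1, m j u ^ α)
      + C * ∫ u in (0 : ℝ)..s, m n u ^ α) (n : ℕ) :
    m n 0 ≤ (n * ((1 - α) * C)) ^ (1 - α)⁻¹ := by
  have h0 := h n 0 ⟨le_rfl, zero_le_one⟩
  rw [intervalIntegral.integral_same, mul_zero, add_zero] at h0
  have h1α : 0 < 1 - α := by linarith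
  rw [Real.le_rpow_inv_iff_of_pos (hm0 n 0) (by positivity) h1α]
  exact (Real.rpow_le_rpow (hm0 n 0) h0 h1α.le).trans
    (rpow_sum_integral_rpow_le hα0 hα1 hC hm hm0 h n)

end Bihari

section Moments

variable {Ω : Type*} {mΩ : MeasurableSpace Ω} {μ : Measure Ω} {r : ℝ}

lemma abs_add_mul_le {s : ℝ} (hs : s ∈ Icc (0 : ℝ) 1) (x y : ℝ) : |x + s * y| ≤ |x| + |y| := by
  have : |s * y| ≤ |y| := by
    rw [abs_mul, abs_of_nonneg hs.1]
    exact mul_le_of_le_one_left (abs_nonneg y) hs.2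
  linarith [abs_add_le x (s * y)]

lemma memLp_ofReal_iff_integrable_abs_rpow (hr : 0 < r) {X : Ω → ℝ}
    (hX : AEStronglyMeasurable X μ) :
    MemLp X (ENNReal.ofReal r) μ ↔ Integrable (fun ω => |X ω| ^ r) μ := by
  rw [← integrable_norm_rpow_iff hX (by simpa using hr) ofReal_ne_top, toReal_ofReal hr.le]
  rfl

lemma integrable_abs_rpow_of_memLp (hr : 0 < r) {X : Ω → ℝ} (hX : MemLp X (ENNReal.ofReal r) μ) :
    Integrable (fun ω => |X ω| ^ r) μ :=
  (memLp_ofReal_iff_integrable_abs_rpow hr hX.1).1 hX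

lemma rpow_mul_rpow_le_add {a b p q : ℝ} (ha : 0 ≤ a) (hb : 0 ≤ b) (hp : 0 ≤ p) (hq : 0 ≤ q) :
    a ^ p * b ^ q ≤ a ^ (p + q) + b ^ (p + q) := by
  have hmax : 0 ≤ max a b := le_max_of_le_left ha
  calc a ^ p * b ^ q ≤ max a b ^ p * max a b ^ q := by
        gcongr
        exacts [le_max_left a b, le_max_right a b]
    _ = max a b ^ (p + q) := (Real.rpow_add_of_nonneg hmax hp hq).symm
    _ ≤ a ^ (p + q) + b ^ (p + q) := by
      rcases max_choice a b with h | h <;> rw [h] <;> simp [Real.rpow_nonneg, ha, hb]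

lemma integrable_abs_rpow_mul_abs_rpow {p q : ℝ} (hp : 0 ≤ p) (hq : 0 ≤ q) (hr : 0 < p + q)
    {X Y : Ω → ℝ} (hX : MemLp X (ENNReal.ofReal (p + q)) μ)
    (hY : MemLp Y (ENNReal.ofReal (p + q)) μ) :
    Integrable (fun ω => |X ω| ^ p * |Y ω| ^ q) μ := by
  refine ((integrable_abs_rpow_of_memLp hr hX).add (integrable_abs_rpow_of_memLp hr hY)).mono'
    (((continuous_abs_rpow hp).comp_aestronglyMeasurable hX.1).mul
      ((continuous_abs_rpow hq).comp_aestronglyMeasurable hY.1))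
    (Eventually.of_forall fun ω => ?_)
  rw [Real.norm_of_nonneg (by positivity)]
  exact rpow_mul_rpow_le_add (abs_nonneg _) (abs_nonneg _) hp hq

lemma integrable_abs_rpow_mul_sq (hr : 2 ≤ r) {X H : Ω → ℝ} (hX : MemLp X (ENNReal.ofReal r) μ)
    (hH : MemLp H (ENNReal.ofReal r) μ) : Integrable (fun ω => |X ω| ^ (r - 2) * H ω ^ 2) μ := by
  have h := integrable_abs_rpow_mul_abs_rpow (p := r - 2) (q := 2) (X := X) (Y := H) (μ := μ)
    (by linarith) zero_le_two (by linarith)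
  rw [sub_add_cancel] at h
  simpa only [Real.rpow_two, sq_abs] using h hX hH

lemma integrable_signedPow_mul (hr : 2 ≤ r) {X Y : Ω → ℝ} (hX : MemLp X (ENNReal.ofReal r) μ)
    (hY : MemLp Y (ENNReal.ofReal r) μ) : Integrable (fun ω => signedPow r (X ω) * Y ω) μ := by
  have h := integrable_abs_rpow_mul_abs_rpow (p := r - 1) (q := 1) (X := X) (Y := Y) (μ := μ)
    (by linarith) zero_le_one (by linarith)
  rw [sub_add_cancel] at h
  refine (h hX hY).mono
    (((continuous_signedPow hr).comp_aestronglyMeasurable hX.1).mul hY.1)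
    (Eventually.of_forall fun ω => le_of_eq ?_)
  have hpow : |X ω| ^ (r - 2) * |X ω| = |X ω| ^ (r - 1) := by
    rw [← Real.rpow_add_one' (abs_nonneg _) (by linarith)]
    congr 1
    ring
  simp only [signedPow, norm_mul, Real.norm_eq_abs, Real.rpow_one, abs_abs, Real.abs_rpow_of_nonneg,
    abs_nonneg, hpow]

lemma integral_rpow_mul_rpow_le {p q : ℝ} (hp : 0 ≤ p) (hq : 0 ≤ q) (hpq : p + q = 1)
    {f g : Ω → ℝ} (hf : Integrable f μ) (hg : Integrable g μ) (hf0 : ∀ ω, 0 ≤ f ω)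
    (hg0 : ∀ ω, 0 ≤ g ω) :
    ∫ ω, f ω ^ p * g ω ^ q ∂μ ≤ (∫ ω, f ω ∂μ) ^ p * (∫ ω, g ω ∂μ) ^ q := by
  have hfi : 0 ≤ ∫ ω, f ω ∂μ := integral_nonneg hf0
  have hgi : 0 ≤ ∫ ω, g ω ∂μ := integral_nonneg hg0
  rw [integral_eq_lintegral_of_nonneg_ae
    (Eventually.of_forall fun ω => mul_nonneg (Real.rpow_nonneg (hf0 ω) p)
      (Real.rpow_nonneg (hg0 ω) q))
    ((hf.1.aemeasurable.pow_const p).mul (hg.1.aemeasurable.pow_const q)).aestronglyMeasurable]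
  refine toReal_le_of_le_ofReal (by positivity) ?_
  calc ∫⁻ ω, ENNReal.ofReal (f ω ^ p * g ω ^ q) ∂μ
      = ∫⁻ ω, ENNReal.ofReal (f ω) ^ p * ENNReal.ofReal (g ω) ^ q ∂μ :=
        lintegral_congr fun ω => by
          rw [ofReal_mul (Real.rpow_nonneg (hf0 ω) p), ofReal_rpow_of_nonneg (hf0 ω) hp,
            ofReal_rpow_of_nonneg (hg0 ω) hq]
    _ ≤ (∫⁻ ω, ENNReal.ofReal (f ω) ∂μ) ^ p * (∫⁻ ω, ENNReal.ofReal (g ω) ∂μ) ^ q :=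
        lintegral_mul_norm_pow_le hf.1.aemeasurable.ennreal_ofReal
          hg.1.aemeasurable.ennreal_ofReal hp hq hpq
    _ = ENNReal.ofReal ((∫ ω, f ω ∂μ) ^ p * (∫ ω, g ω ∂μ) ^ q) := by
        rw [← ofReal_integral_eq_lintegral_ofReal hf (Eventually.of_forall hf0),
          ← ofReal_integral_eq_lintegral_ofReal hg (Eventually.of_forall hg0),
          ofReal_mul (by positivity), ofReal_rpow_of_nonneg hfi hp, ofReal_rpow_of_nonneg hgi hq]

lemma integral_abs_rpow_mul_sq_le (hr : 2 ≤ r) {X H : Ω → ℝ} (hX : MemLp X (ENNReal.ofReal r) μ)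
    (hH : MemLp H (ENNReal.ofReal r) μ) :
    ∫ ω, |X ω| ^ (r - 2) * H ω ^ 2 ∂μ
      ≤ (∫ ω, |X ω| ^ r ∂μ) ^ (1 - 2 / r) * (∫ ω, |H ω| ^ r ∂μ) ^ (2 / r) := by
  have hr0 : 0 < r := by linarith
  have hexp : 0 ≤ 1 - 2 / r := sub_nonneg.2 ((div_le_one hr0).2 hr)
  have hmul : r * (1 - 2 / r) = r - 2 := by field_simp
  refine (integral_congr_ae (Eventually.of_forall fun ω => ?_)).trans_le
    (integral_rpow_mul_rpow_le hexp (by positivity) (by ring) (integrable_abs_rpow_of_memLp hr0 hX)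
      (integrable_abs_rpow_of_memLp hr0 hH) (fun _ => by positivity) (fun _ => by positivity))
  simp only [← Real.rpow_mul (abs_nonneg _), hmul, mul_div_cancel₀ _ hr0.ne', Real.rpow_two, sq_abs]

lemma memLp_add_mul {X Y : Ω → ℝ} (hX : MemLp X (ENNReal.ofReal r) μ)
    (hY : MemLp Y (ENNReal.ofReal r) μ) (s : ℝ) :
    MemLp (fun ω => X ω + s * Y ω) (ENNReal.ofReal r) μ :=
  hX.add (hY.const_mul s)

lemma continuousOn_integral_abs_add_mul_rpow (hr : 0 < r) {X Y : Ω → ℝ}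
    (hX : MemLp X (ENNReal.ofReal r) μ) (hY : MemLp Y (ENNReal.ofReal r) μ) :
    ContinuousOn (fun s : ℝ => ∫ ω, |X ω + s * Y ω| ^ r ∂μ) (Icc 0 1) := by
  have hbound : Integrable (fun ω => |‖X ω‖ + ‖Y ω‖| ^ r) μ :=
    integrable_abs_rpow_of_memLp hr (hX.norm.add hY.norm)
  refine continuousOn_of_dominated
    (fun s _ => (integrable_abs_rpow_of_memLp hr (memLp_add_mul hX hY s)).1)
    (fun s hs => Eventually.of_forall fun ω => ?_) hbound
    (Eventually.of_forall fun ω => ((continuous_abs_rpow hr.le).comp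
      (by fun_prop : Continuous fun s : ℝ => X ω + s * Y ω)).continuousOn)
  rw [Real.norm_of_nonneg (by positivity)]
  gcongr ?_ ^ r
  exact (abs_add_mul_le hs _ _).trans (le_abs_self _)

section SegmentIntegral

variable [SFinite μ] {X Y H : Ω → ℝ} {t : ℝ}

lemma integrable_prod_abs_add_mul_rpow_mul_sq (hr : 2 ≤ r) (hX : MemLp X (ENNReal.ofReal r) μ)
    (hY : MemLp Y (ENNReal.ofReal r) μ) (hH : MemLp H (ENNReal.ofReal r) μ)
    (ht : t ∈ Icc (0 : ℝ) 1) :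
    Integrable (fun p : ℝ × Ω => |X p.2 + p.1 * Y p.2| ^ (r - 2) * H p.2 ^ 2)
      ((volume.restrict (uIoc 0 t)).prod μ) := by
  have hr2 : 0 ≤ r - 2 := by linarith
  have : IsFiniteMeasure (volume.restrict (uIoc (0 : ℝ) t)) := by
    rw [uIoc_of_le ht.1]
    infer_instance
  have hmem : ∀ᵐ p ∂((volume.restrict (uIoc (0 : ℝ) t)).prod μ), p.1 ∈ uIoc (0 : ℝ) t :=
    Measure.quasiMeasurePreserving_fst.ae (ae_restrict_mem measurableSet_uIoc)
  refine ((integrable_abs_rpow_mul_sq hr (hX.norm.add hY.norm) hH).comp_snd _).mono' ?_ ?_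
  · exact ((continuous_abs_rpow hr2).comp_aestronglyMeasurable
      (hX.1.comp_snd.add (measurable_fst.aestronglyMeasurable.mul hY.1.comp_snd))).mul
      (hH.1.comp_snd.pow 2)
  · filter_upwards [hmem] with p hp
    rw [uIoc_of_le ht.1] at hp
    rw [Real.norm_of_nonneg (by positivity)]
    gcongr ?_ ^ (r - 2) * _
    exact (abs_add_mul_le ⟨hp.1.le, hp.2.trans ht.2⟩ _ _).trans (le_abs_self _)

lemma segmentIntegral_mul_sq_eq (x y h : ℝ) :
    segmentIntegral r x y t * h ^ 2 = ∫ s in (0 : ℝ)..t, |x + s * y| ^ (r - 2) * h ^ 2 :=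
  (intervalIntegral.integral_mul_const _ _).symm

lemma integrable_segmentIntegral_mul_sq (hr : 2 ≤ r) (hX : MemLp X (ENNReal.ofReal r) μ)
    (hY : MemLp Y (ENNReal.ofReal r) μ) (hH : MemLp H (ENNReal.ofReal r) μ)
    (ht : t ∈ Icc (0 : ℝ) 1) :
    Integrable (fun ω => segmentIntegral r (X ω) (Y ω) t * H ω ^ 2) μ := by
  simpa only [segmentIntegral_mul_sq_eq, intervalIntegral.integral_of_le ht.1, uIoc_of_le ht.1]
    using (integrable_prod_abs_add_mul_rpow_mul_sq hr hX hY hH ht).integral_prod_right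

lemma integral_segmentIntegral_mul_sq_le (hr : 2 ≤ r) (hX : MemLp X (ENNReal.ofReal r) μ)
    (hY : MemLp Y (ENNReal.ofReal r) μ) (hH : MemLp H (ENNReal.ofReal r) μ)
    (ht : t ∈ Icc (0 : ℝ) 1) :
    ∫ ω, segmentIntegral r (X ω) (Y ω) t * H ω ^ 2 ∂μ
      ≤ (∫ ω, |H ω| ^ r ∂μ) ^ (2 / r)
        * ∫ s in (0 : ℝ)..t, (∫ ω, |X ω + s * Y ω| ^ r ∂μ) ^ (1 - 2 / r) := by
  have hr0 : 0 < r := by linarith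
  have hexp : 0 ≤ 1 - 2 / r := sub_nonneg.2 ((div_le_one hr0).2 hr)
  have hprod := integrable_prod_abs_add_mul_rpow_mul_sq hr hX hY hH ht
  have hmoment : ContinuousOn (fun s : ℝ => (∫ ω, |X ω + s * Y ω| ^ r ∂μ) ^ (1 - 2 / r))
      (Icc 0 t) :=
    ((continuousOn_integral_abs_add_mul_rpow hr0 hX hY).mono
      (Icc_subset_Icc le_rfl ht.2)).rpow_const fun _ _ => Or.inr hexp
  rw [← uIcc_of_le ht.1] at hmoment
  simp only [segmentIntegral_mul_sq_eq]
  rw [← intervalIntegral_integral_swap (f := fun s ω => |X ω + s * Y ω| ^ (r - 2) * H ω ^ 2) hprod,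
    ← intervalIntegral.integral_const_mul]
  refine intervalIntegral.integral_mono_on ht.1
    (intervalIntegrable_iff.2 hprod.integral_prod_left)
    (hmoment.intervalIntegrable.const_mul _) fun s _ => ?_
  rw [mul_comm]
  exact integral_abs_rpow_mul_sq_le hr (memLp_add_mul hX hY s) hH

end SegmentIntegral

end Moments

/-! ### Rio's inequality -/

section Rio

variable {Ω : Type*} {mΩ : MeasurableSpace Ω} {μ : Measure Ω} {r : ℝ} {Y H : ℕ → Ω → ℝ}

/-- The partial sum `Y 0 + ⋯ + Y (n - 1)` of a sequence of random variables. -/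
def partialSum (Y : ℕ → Ω → ℝ) (n : ℕ) : Ω → ℝ := ∑ i ∈ Finset.range n, Y i

lemma partialSum_succ (Y : ℕ → Ω → ℝ) (n : ℕ) : partialSum Y (n + 1) = partialSum Y n + Y n :=
  Finset.sum_range_succ Y n

lemma memLp_partialSum (hYr : ∀ i, MemLp (Y i) (ENNReal.ofReal r) μ) (n : ℕ) :
    MemLp (partialSum Y n) (ENNReal.ofReal r) μ :=
  memLp_finsetSum' _ fun i _ => hYr i

lemma stronglyMeasurable_partialSum {ℱ : Filtration ℕ mΩ} (hY : StronglyAdapted ℱ Y) {n j : ℕ}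
    (hn : n ≤ j + 1) : StronglyMeasurable[ℱ j] (partialSum Y n) :=
  Finset.stronglyMeasurable_sum _ fun i hi =>
    (hY i).mono (ℱ.mono (by have := Finset.mem_range.1 hi; omega))

lemma signedPow_partialSum_succ_sub (hr : 2 ≤ r) (Y : ℕ → Ω → ℝ) (j : ℕ) (ω : Ω) :
    signedPow r (partialSum Y (j + 1) ω) - signedPow r (partialSum Y j ω)
      = (r - 1) * Y j ω * segmentIntegral r (partialSum Y j ω) (Y j ω) 1 := by
  rw [← signedPow_sub hr, one_mul, partialSum_succ, Pi.add_apply]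

lemma integral_mul_condExp_of_stronglyMeasurable {m : MeasurableSpace Ω} (hm : m ≤ mΩ)
    [SigmaFinite (μ.trim hm)] {D Z : Ω → ℝ} (hD : StronglyMeasurable[m] D)
    (hDZ : Integrable (D * Z) μ) (hZ : Integrable Z μ) :
    Integrable (D * μ[Z | m]) μ ∧ ∫ ω, (D * μ[Z | m]) ω ∂μ = ∫ ω, (D * Z) ω ∂μ := by
  have hpull := condExp_mul_of_stronglyMeasurable_left hD hDZ hZ
  exact ⟨integrable_condExp.congr hpull,
    (integral_congr_ae hpull).symm.trans (integral_condExp hm)⟩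

lemma integrable_signedPow_partialSum_sub_mul (hr : 2 ≤ r)
    (hYr : ∀ i, MemLp (Y i) (ENNReal.ofReal r) μ) (j : ℕ) {Z : Ω → ℝ}
    (hZ : MemLp Z (ENNReal.ofReal r) μ) :
    Integrable (fun ω =>
      (signedPow r (partialSum Y (j + 1) ω) - signedPow r (partialSum Y j ω)) * Z ω) μ := by
  simp only [sub_mul]
  exact (integrable_signedPow_mul hr (memLp_partialSum hYr (j + 1)) hZ).sub
    (integrable_signedPow_mul hr (memLp_partialSum hYr j) hZ)

section Increments

variable [IsFiniteMeasure μ] {ℱ : Filtration ℕ mΩ}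

lemma integral_signedPow_partialSum_sub_mul_le (hr : 2 ≤ r) (hY : StronglyAdapted ℱ Y)
    (hYr : ∀ i, MemLp (Y i) (ENNReal.ofReal r) μ) (hHr : ∀ i, MemLp (H i) (ENNReal.ofReal r) μ)
    (hYH : ∀ j l, j < l → Y j * μ[∑ i ∈ Finset.Ico j l, Y i | ℱ j] ≤ᵐ[μ] H j ^ 2)
    {j l : ℕ} (hjl : j < l) :
    ∫ ω, (signedPow r (partialSum Y (j + 1) ω) - signedPow r (partialSum Y j ω))
        * (partialSum Y l ω - partialSum Y j ω) ∂μ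
      ≤ (r - 1) * ∫ ω, segmentIntegral r (partialSum Y j ω) (Y j ω) 1 * H j ω ^ 2 ∂μ := by
  have hr1 : 1 ≤ ENNReal.ofReal r := one_le_ofReal.2 (by linarith)
  set D : Ω → ℝ := fun ω =>
    signedPow r (partialSum Y (j + 1) ω) - signedPow r (partialSum Y j ω) with hD
  set Z : Ω → ℝ := ∑ i ∈ Finset.Ico j l, Y i
  have hZ_eq : Z = partialSum Y l - partialSum Y j := Finset.sum_Ico_eq_sub _ hjl.le
  have hZr : MemLp Z (ENNReal.ofReal r) μ := memLp_finsetSum' _ fun i _ => hYr i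
  have hDmeas : StronglyMeasurable[ℱ j] D :=
    ((continuous_signedPow hr).comp_stronglyMeasurable
      (stronglyMeasurable_partialSum hY le_rfl)).sub
    ((continuous_signedPow hr).comp_stronglyMeasurable
      (stronglyMeasurable_partialSum hY j.le_succ))
  obtain ⟨hint, heq⟩ := integral_mul_condExp_of_stronglyMeasurable (ℱ.le j) hDmeas
    (integrable_signedPow_partialSum_sub_mul hr hYr j hZr) (hZr.integrable hr1)
  calc ∫ ω, D ω * (partialSum Y l ω - partialSum Y j ω) ∂μ
      = ∫ ω, (D * Z) ω ∂μ := by rw [hZ_eq]; rfl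
    _ = ∫ ω, (D * μ[Z | ℱ j]) ω ∂μ := heq.symm
    _ ≤ ∫ ω, (r - 1) * (segmentIntegral r (partialSum Y j ω) (Y j ω) 1 * H j ω ^ 2) ∂μ := by
      refine integral_mono_ae hint ((integrable_segmentIntegral_mul_sq hr (memLp_partialSum hYr j)
        (hYr j) (hHr j) ⟨zero_le_one, le_rfl⟩).const_mul _) ?_
      filter_upwards [hYH j l hjl] with ω hω
      have hcoeff : 0 ≤ (r - 1) * segmentIntegral r (partialSum Y j ω) (Y j ω) 1 :=
        mul_nonneg (by linarith) (segmentIntegral_nonneg zero_le_one)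
      have := mul_le_mul_of_nonneg_left hω hcoeff
      simp only [Pi.mul_apply, Pi.pow_apply, hD, signedPow_partialSum_succ_sub hr] at this ⊢
      linarith
    _ = _ := integral_const_mul _ _

lemma integral_signedPow_partialSum_sub_mul_interpolation_le (hr : 2 ≤ r)
    (hY : StronglyAdapted ℱ Y)
    (hYr : ∀ i, MemLp (Y i) (ENNReal.ofReal r) μ) (hHr : ∀ i, MemLp (H i) (ENNReal.ofReal r) μ)
    (hYH : ∀ j l, j < l → Y j * μ[∑ i ∈ Finset.Ico j l, Y i | ℱ j] ≤ᵐ[μ] H j ^ 2)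
    {j n : ℕ} (hjn : j < n) {t : ℝ} (ht : t ∈ Icc (0 : ℝ) 1) :
    ∫ ω, (signedPow r (partialSum Y (j + 1) ω) - signedPow r (partialSum Y j ω))
        * (partialSum Y n ω + t * Y n ω - partialSum Y j ω) ∂μ
      ≤ (r - 1) * ∫ ω, segmentIntegral r (partialSum Y j ω) (Y j ω) 1 * H j ω ^ 2 ∂μ := by
  set D : Ω → ℝ := fun ω =>
    signedPow r (partialSum Y (j + 1) ω) - signedPow r (partialSum Y j ω)
  have hint (l : ℕ) : Integrable (fun ω => D ω * (partialSum Y l ω - partialSum Y j ω)) μ :=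
    integrable_signedPow_partialSum_sub_mul hr hYr j
      ((memLp_partialSum hYr l).sub (memLp_partialSum hYr j))
  have hle {l : ℕ} (hjl : j < l) :=
    integral_signedPow_partialSum_sub_mul_le hr hY hYr hHr hYH hjl
  have hsplit (ω : Ω) : D ω * (partialSum Y n ω + t * Y n ω - partialSum Y j ω)
      = (1 - t) * (D ω * (partialSum Y n ω - partialSum Y j ω))
        + t * (D ω * (partialSum Y (n + 1) ω - partialSum Y j ω)) := by
    rw [partialSum_succ, Pi.add_apply]
    ring
  rw [integral_congr_ae (Eventually.of_forall hsplit),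
    integral_add ((hint n).const_mul _) ((hint (n + 1)).const_mul _),
    integral_const_mul, integral_const_mul]
  linarith [mul_le_mul_of_nonneg_left (hle hjn) (sub_nonneg.2 ht.2),
    mul_le_mul_of_nonneg_left (hle (hjn.trans n.lt_succ_self)) ht.1]

lemma sq_le_sq_ae_of_mul_condExp_sum_le (hY : StronglyAdapted ℱ Y) (hYi : ∀ i, Integrable (Y i) μ)
    (hYH : ∀ j l, j < l → Y j * μ[∑ i ∈ Finset.Ico j l, Y i | ℱ j] ≤ᵐ[μ] H j ^ 2) (n : ℕ) :
    ∀ᵐ ω ∂μ, Y n ω ^ 2 ≤ H n ω ^ 2 := by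
  have h := hYH n (n + 1) n.lt_succ_self
  rw [Nat.Ico_succ_singleton, Finset.sum_singleton,
    condExp_of_stronglyMeasurable (ℱ.le n) (hY n) (hYi n)] at h
  filter_upwards [h] with ω hω
  rwa [sq (Y n ω)]

lemma signedPow_add_mul_sub_mul_le (hr : 2 ≤ r) {x y h t : ℝ} (hyh : y ^ 2 ≤ h ^ 2)
    (ht : t ∈ Icc (0 : ℝ) 1) :
    (signedPow r (x + t * y) - signedPow r x) * (t * y)
      ≤ (r - 1) * (segmentIntegral r x y t * h ^ 2) := by
  have hseg : 0 ≤ segmentIntegral r x y t := segmentIntegral_nonneg ht.1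
  have hcoeff : 0 ≤ (r - 1) * segmentIntegral r x y t := mul_nonneg (by linarith) hseg
  calc (signedPow r (x + t * y) - signedPow r x) * (t * y)
      = (r - 1) * segmentIntegral r x y t * (t * y ^ 2) := by rw [signedPow_sub hr]; ring
    _ ≤ (r - 1) * segmentIntegral r x y t * h ^ 2 := by
      gcongr
      exact (mul_le_of_le_one_left (sq_nonneg y) ht.2).trans hyh
    _ = _ := mul_assoc _ _ _

lemma integral_abs_partialSum_add_mul_rpow_le (hr : 2 ≤ r) (hY : StronglyAdapted ℱ Y)
    (hYr : ∀ i, MemLp (Y i) (ENNReal.ofReal r) μ) (hHr : ∀ i, MemLp (H i) (ENNReal.ofReal r) μ)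
    (hYH : ∀ j l, j < l → Y j * μ[∑ i ∈ Finset.Ico j l, Y i | ℱ j] ≤ᵐ[μ] H j ^ 2)
    (n : ℕ) {t : ℝ} (ht : t ∈ Icc (0 : ℝ) 1) :
    ∫ ω, |partialSum Y n ω + t * Y n ω| ^ r ∂μ
      ≤ r * (r - 1) * ((∑ j ∈ Finset.range n,
          ∫ ω, segmentIntegral r (partialSum Y j ω) (Y j ω) 1 * H j ω ^ 2 ∂μ)
        + ∫ ω, segmentIntegral r (partialSum Y n ω) (Y n ω) t * H n ω ^ 2 ∂μ) := by
  have hr1 : 1 ≤ ENNReal.ofReal r := one_le_ofReal.2 (by linarith)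
  have hWr := memLp_add_mul (memLp_partialSum hYr n) (hYr n) t
  have hterm (j : ℕ) : Integrable (fun ω =>
      (signedPow r (partialSum Y (j + 1) ω) - signedPow r (partialSum Y j ω))
        * (partialSum Y n ω + t * Y n ω - partialSum Y j ω)) μ :=
    integrable_signedPow_partialSum_sub_mul hr hYr j (hWr.sub (memLp_partialSum hYr j))
  have hsum := integrable_finsetSum (Finset.range n) fun j _ => hterm j
  have hlast := (integrable_segmentIntegral_mul_sq hr (memLp_partialSum hYr n) (hYr n) (hHr n)
    ht).const_mul (r - 1)
  have hpointwise : ∀ᵐ ω ∂μ, |partialSum Y n ω + t * Y n ω| ^ r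
      ≤ r * ((∑ j ∈ Finset.range n,
          (signedPow r (partialSum Y (j + 1) ω) - signedPow r (partialSum Y j ω))
            * (partialSum Y n ω + t * Y n ω - partialSum Y j ω))
        + (r - 1) * (segmentIntegral r (partialSum Y n ω) (Y n ω) t * H n ω ^ 2)) := by
    filter_upwards [sq_le_sq_ae_of_mul_condExp_sum_le hY (fun i => (hYr i).integrable hr1) hYH n]
      with ω hω
    refine (abs_rpow_le_sum_signedPow_sub_mul (by linarith) (s := fun j => partialSum Y j ω)
      rfl n _).trans ?_
    rw [add_sub_cancel_left]
    gcongr r * (_ + ?_)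
    exact signedPow_add_mul_sub_mul_le hr hω ht
  refine (integral_mono_ae (integrable_abs_rpow_of_memLp (by linarith) hWr)
    ((hsum.add hlast).const_mul r) hpointwise).trans ?_
  simp only [Pi.add_apply]
  rw [integral_const_mul, integral_add hsum hlast, integral_finsetSum _ fun j _ => hterm j,
    integral_const_mul, mul_assoc r, mul_add (r - 1), Finset.mul_sum]
  gcongr with j hj
  exact integral_signedPow_partialSum_sub_mul_interpolation_le hr hY hYr hHr hYH
    (Finset.mem_range.1 hj) ht

lemma integral_abs_partialSum_add_mul_rpow_le_sum_integral_rpow (hr : 2 ≤ r)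
    (hY : StronglyAdapted ℱ Y)
    (hYr : ∀ i, MemLp (Y i) (ENNReal.ofReal r) μ) (hHr : ∀ i, MemLp (H i) (ENNReal.ofReal r) μ)
    (hYH : ∀ j l, j < l → Y j * μ[∑ i ∈ Finset.Ico j l, Y i | ℱ j] ≤ᵐ[μ] H j ^ 2)
    {η : ℝ} (hη : ∀ i, ∫ ω, |H i ω| ^ r ∂μ ≤ η) (n : ℕ) {t : ℝ} (ht : t ∈ Icc (0 : ℝ) 1) :
    ∫ ω, |partialSum Y n ω + t * Y n ω| ^ r ∂μ
      ≤ r * (r - 1) * η ^ (2 / r) * ∑ j ∈ Finset.range n,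
          (∫ s in (0 : ℝ)..1, (∫ ω, |partialSum Y j ω + s * Y j ω| ^ r ∂μ) ^ (1 - 2 / r))
        + r * (r - 1) * η ^ (2 / r) *
          ∫ s in (0 : ℝ)..t, (∫ ω, |partialSum Y n ω + s * Y n ω| ^ r ∂μ) ^ (1 - 2 / r) := by
  have hr1 : 0 ≤ r - 1 := by linarith
  have hsegment (j : ℕ) {u : ℝ} (hu : u ∈ Icc (0 : ℝ) 1) :
      ∫ ω, segmentIntegral r (partialSum Y j ω) (Y j ω) u * H j ω ^ 2 ∂μ
        ≤ η ^ (2 / r) * ∫ s in (0 : ℝ)..u,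
          (∫ ω, |partialSum Y j ω + s * Y j ω| ^ r ∂μ) ^ (1 - 2 / r) := by
    refine (integral_segmentIntegral_mul_sq_le hr (memLp_partialSum hYr j) (hYr j) (hHr j)
      hu).trans ?_
    gcongr
    · exact intervalIntegral.integral_nonneg hu.1 fun s _ => by positivity
    · exact hη j
  refine (integral_abs_partialSum_add_mul_rpow_le hr hY hYr hHr hYH n ht).trans ?_
  rw [← mul_add, mul_assoc (r * (r - 1)), mul_add (η ^ (2 / r)), Finset.mul_sum]
  gcongr with j
  · exact hsegment j ⟨zero_le_one, le_rfl⟩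
  · exact hsegment n ht

theorem integral_abs_sum_rpow_le_of_mul_condExp_sum_le (hr : 2 ≤ r) (hY : StronglyAdapted ℱ Y)
    (hYr : ∀ i, MemLp (Y i) (ENNReal.ofReal r) μ) (hHr : ∀ i, MemLp (H i) (ENNReal.ofReal r) μ)
    (hYH : ∀ j l, j < l → Y j * μ[∑ i ∈ Finset.Ico j l, Y i | ℱ j] ≤ᵐ[μ] H j ^ 2)
    {η : ℝ} (hη : ∀ i, ∫ ω, |H i ω| ^ r ∂μ ≤ η) (n : ℕ) :
    ∫ ω, |∑ i ∈ Finset.range n, Y i ω| ^ r ∂μ ≤ (2 * (r - 1) * n) ^ (r / 2) * η := by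
  have hr0 : 0 < r := by linarith
  have hr1 : 0 ≤ r - 1 := by linarith
  have hη0 : 0 ≤ η := (integral_nonneg fun _ => by positivity).trans (hη 0)
  have hinv : (1 - (1 - 2 / r))⁻¹ = r / 2 := by rw [_root_.sub_sub_cancel, inv_div]
  have hbihari := le_rpow_of_le_sum_integral_rpow (α := 1 - 2 / r)
    (C := r * (r - 1) * η ^ (2 / r))
    (m := fun n s => ∫ ω, |partialSum Y n ω + s * Y n ω| ^ r ∂μ)
    (sub_nonneg.2 ((div_le_one hr0).2 hr)) (sub_lt_self _ (by positivity)) (by positivity)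
    (fun n => continuousOn_integral_abs_add_mul_rpow hr0 (memLp_partialSum hYr n) (hYr n))
    (fun n s => integral_nonneg fun _ => by positivity)
    (fun n t ht => integral_abs_partialSum_add_mul_rpow_le_sum_integral_rpow hr hY hYr hHr hYH hη n
      ht) n
  calc ∫ ω, |∑ i ∈ Finset.range n, Y i ω| ^ r ∂μ
      = ∫ ω, |partialSum Y n ω + 0 * Y n ω| ^ r ∂μ := by
        simp only [partialSum, Finset.sum_apply, zero_mul, add_zero]
    _ ≤ (n * ((1 - (1 - 2 / r)) * (r * (r - 1) * η ^ (2 / r)))) ^ (r / 2) := hinv ▸ hbihari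
    _ = (2 * (r - 1) * n * η ^ (2 / r)) ^ (r / 2) := by
        congr 1
        field_simp
        ring
    _ = (2 * (r - 1) * n) ^ (r / 2) * η := by
        rw [Real.mul_rpow (by positivity) (by positivity), ← Real.rpow_mul hη0,
          div_mul_div_cancel₀ hr0.ne', div_self two_ne_zero, Real.rpow_one]

end Increments

theorem integral_abs_sum_rpow_le_of_condExp_succ_eq_zero [IsFiniteMeasure μ]
    {ℱ : Filtration ℕ mΩ} (hr : 2 ≤ r) (hY : StronglyAdapted ℱ Y)
    (hYr : ∀ i, MemLp (Y i) (ENNReal.ofReal r) μ) (hYcond : ∀ i, μ[Y (i + 1) | ℱ i] =ᵐ[μ] 0)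
    {η : ℝ} (hη : ∀ i, ∫ ω, |Y i ω| ^ r ∂μ ≤ η) (n : ℕ) :
    ∫ ω, |∑ i ∈ Finset.range n, Y i ω| ^ r ∂μ ≤ (2 * (r - 1) * n) ^ (r / 2) * η := by
  have hYi (i : ℕ) : Integrable (Y i) μ :=
    (hYr i).integrable (one_le_ofReal.2 (by linarith))
  have hfuture {j i : ℕ} (hji : j < i) : μ[Y i | ℱ j] =ᵐ[μ] 0 := by
    obtain ⟨k, rfl⟩ := Nat.exists_eq_add_of_lt hji
    calc μ[Y (j + k + 1) | ℱ j]
        =ᵐ[μ] μ[μ[Y (j + k + 1) | ℱ (j + k)] | ℱ j] :=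
          (condExp_condExp_of_le (ℱ.mono (by omega)) (ℱ.le _)).symm
      _ =ᵐ[μ] μ[(0 : Ω → ℝ) | ℱ j] := condExp_congr_ae (hYcond (j + k))
      _ = 0 := condExp_zero
  refine integral_abs_sum_rpow_le_of_mul_condExp_sum_le hr hY hYr hYr (fun j l hjl => ?_) hη n
  have hsum := condExp_finsetSum (μ := μ) (s := Finset.Ico j l) (fun i _ => hYi i) (ℱ j)
  have hvanish : ∀ᵐ ω ∂μ, ∀ i, j < i → μ[Y i | ℱ j] ω = 0 :=
    ae_all_iff.2 fun i => (em (j < i)).elim (fun h => (hfuture h).mono fun _ hω _ => hω)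
      fun h => Eventually.of_forall fun _ h' => absurd h' h
  filter_upwards [hsum, hvanish] with ω hsum hvanish
  rw [Pi.mul_apply, hsum, Finset.sum_apply, Finset.sum_eq_single_of_mem j
    (Finset.left_mem_Ico.2 hjl) fun i hi hij =>
      hvanish i (lt_of_le_of_ne (Finset.mem_Ico.1 hi).1 hij.symm),
    condExp_of_stronglyMeasurable (ℱ.le j) (hY j) (hYi j)]
  exact (sq _).ge

end Rio

/-! ### The Markov property -/

section TransitionKernel

variable {Ω α β : Type*} {m mΩ : MeasurableSpace Ω} [MeasurableSpace α] [MeasurableSpace β]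
  {μ : Measure Ω} [IsFiniteMeasure μ] {X : Ω → α} {Y : Ω → β} {Q : Kernel α β} [IsMarkovKernel Q]

lemma map_prodMk_restrict_eq_compProd (hm : m ≤ mΩ) (hX : Measurable[m] X) (hY : Measurable Y)
    (hQ : ∀ B, MeasurableSet[m] B → (μ.restrict B).map Y = Q ∘ₘ (μ.restrict B).map X)
    {B : Set Ω} (hB : MeasurableSet[m] B) :
    (μ.restrict B).map (fun ω => (X ω, Y ω)) = (μ.restrict B).map X ⊗ₘ Q := by
  have hXΩ : Measurable X := hX.mono hm le_rfl
  have hfinite : IsFiniteMeasure ((μ.restrict B).map fun ω => (X ω, Y ω)) :=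
    Measure.isFiniteMeasure_map _ _
  refine Measure.ext_prod fun {s t} hs ht => ?_
  calc (μ.restrict B).map (fun ω => (X ω, Y ω)) (s ×ˢ t)
      = (μ.restrict (X ⁻¹' s ∩ B)).map Y t := by
        rw [Measure.map_apply (hXΩ.prodMk hY) (hs.prod ht), Measure.map_apply hY ht,
          Measure.restrict_apply (hXΩ.prodMk hY (hs.prod ht)), Measure.restrict_apply (hY ht),
          mk_preimage_prod, inter_comm (X ⁻¹' s), inter_assoc]
    _ = ∫⁻ ω in X ⁻¹' s ∩ B, Q (X ω) t ∂μ := by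
        rw [hQ _ ((hX hs).inter hB), Measure.bind_apply ht Q.aemeasurable,
          lintegral_map (Q.measurable_coe ht) hXΩ]
    _ = ((μ.restrict B).map X ⊗ₘ Q) (s ×ˢ t) := by
        rw [Measure.compProd_apply_prod hs ht, setLIntegral_map hs (Q.measurable_coe ht) hXΩ,
          Measure.restrict_restrict (hXΩ hs)]

theorem condExp_prodMk_eq_integral_kernel (hm : m ≤ mΩ) (hX : Measurable[m] X)
    (hY : Measurable Y)
    (hQ : ∀ B, MeasurableSet[m] B → (μ.restrict B).map Y = Q ∘ₘ (μ.restrict B).map X)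
    {F : α × β → ℝ} (hF : Measurable F) (hFi : Integrable (fun ω => F (X ω, Y ω)) μ) :
    μ[fun ω => F (X ω, Y ω) | m] =ᵐ[μ] fun ω => ∫ v, F (X ω, v) ∂(Q (X ω)) := by
  have hXΩ : Measurable X := hX.mono hm le_rfl
  have hXY : AEMeasurable (fun ω => (X ω, Y ω)) μ := (hXΩ.prodMk hY).aemeasurable
  have hG : StronglyMeasurable fun u => ∫ v, F (u, v) ∂(Q u) :=
    hF.stronglyMeasurable.integral_kernel_prod_right'
  have hFQ {B : Set Ω} (hB : MeasurableSet[m] B) : Integrable F ((μ.restrict B).map X ⊗ₘ Q) := by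
    rw [← map_prodMk_restrict_eq_compProd hm hX hY hQ hB,
      integrable_map_measure hF.aestronglyMeasurable hXY.restrict]
    exact hFi.restrict
  refine (ae_eq_condExp_of_forall_setIntegral_eq hm hFi (fun B hB _ => ?_) (fun B hB _ => ?_)
    (hG.comp_measurable hX).aestronglyMeasurable).symm
  · exact (integrable_map_measure hG.aestronglyMeasurable hXΩ.aemeasurable).1
      (hFQ hB).integral_compProd
  · simp only [Function.comp_apply]
    rw [← integral_map hXΩ.aemeasurable hG.aestronglyMeasurable,
      ← Measure.integral_compProd (hFQ hB), ← map_prodMk_restrict_eq_compProd hm hX hY hQ hB,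
      integral_map hXY.restrict hF.aestronglyMeasurable]

instance isMarkovKernel_pow {κ : Kernel α α} [IsMarkovKernel κ] (k : ℕ) :
    IsMarkovKernel (κ ^ k) := by
  induction k with
  | zero => exact inferInstanceAs (IsMarkovKernel Kernel.id)
  | succ k ih =>
    rw [pow_succ']
    exact inferInstanceAs (IsMarkovKernel (κ ∘ₖ (κ ^ k)))

end TransitionKernel

namespace MarkovChain

variable {𝒳 : Type} [MeasurableSpace 𝒳] (M : MarkovChain 𝒳)

instance : IsMarkovKernel M.K := M.isMarkov

instance (x : 𝒳) : IsProbabilityMeasure (M.law x) := M.law_prob x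

/-- The canonical filtration `σ(X_0, …, X_n)` of the path space `ℕ → 𝒳`. -/
abbrev past (𝒳 : Type) [MeasurableSpace 𝒳] :
    Filtration ℕ (inferInstance : MeasurableSpace (ℕ → 𝒳)) :=
  Filtration.piLE

lemma measurable_eval_past {k n : ℕ} (hkn : k ≤ n) :
    Measurable[past 𝒳 n] fun ω : ℕ → 𝒳 => ω k :=
  fun _ hs => ⟨_, measurable_pi_apply (⟨k, hkn⟩ : Iic n) hs, rfl⟩

lemma past_le_comap_fin (n : ℕ) :
    past 𝒳 n ≤ MeasurableSpace.comap (fun (ω : ℕ → 𝒳) (i : Fin (n + 1)) => ω i) inferInstance := by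
  rintro _ ⟨s, hs, rfl⟩
  have hmeas : Measurable fun (p : Fin (n + 1) → 𝒳) (i : Iic n) => p ⟨i, Nat.lt_succ_of_le i.2⟩ :=
    measurable_pi_iff.2 fun i => measurable_pi_apply _
  exact ⟨_, hmeas hs, rfl⟩

lemma map_eval_succ_restrict (x : 𝒳) (n : ℕ) {B : Set (ℕ → 𝒳)} (hB : MeasurableSet[past 𝒳 n] B) :
    ((M.law x).restrict B).map (fun ω => ω (n + 1))
      = M.K ∘ₘ ((M.law x).restrict B).map (fun ω => ω n) := by
  refine Measure.ext fun A hA => ?_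
  rw [Measure.map_apply (measurable_pi_apply _) hA,
    Measure.restrict_apply (measurable_pi_apply _ hA), Measure.bind_apply hA M.K.aemeasurable,
    lintegral_map (M.K.measurable_coe hA) (measurable_pi_apply n)]
  exact M.law_markov x n A hA B (past_le_comap_fin n B hB)

lemma map_eval_add_restrict (x : 𝒳) (n k : ℕ) {B : Set (ℕ → 𝒳)}
    (hB : MeasurableSet[past 𝒳 n] B) :
    ((M.law x).restrict B).map (fun ω => ω (n + k))
      = (M.K ^ k) ∘ₘ ((M.law x).restrict B).map (fun ω => ω n) := by
  induction k with
  | zero => exact Measure.id_comp.symm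
  | succ k ih =>
    rw [pow_succ', ← add_assoc,
      M.map_eval_succ_restrict x (n + k) ((past 𝒳).mono (Nat.le_add_right n k) B hB), ih,
      Measure.comp_assoc]
    rfl

lemma map_eval_zero (x : 𝒳) : (M.law x).map (fun ω => ω 0) = Measure.dirac x := by
  have hstart : ∀ A : Set 𝒳, x ∈ A → M.law x ((fun ω => ω 0) ⁻¹' A) = 1 := fun A hxA =>
    le_antisymm prob_le_one <| (M.law_zero x).ge.trans <|
      measure_mono fun ω (hω : ω 0 = x) => mem_preimage.2 (hω ▸ hxA)
  refine Measure.ext fun A hA => ?_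
  rw [Measure.map_apply (measurable_pi_apply 0) hA, Measure.dirac_apply' _ hA]
  by_cases hxA : x ∈ A
  · rw [hstart A hxA, indicator_of_mem hxA, Pi.one_apply]
  · rw [indicator_of_notMem hxA,
      ← prob_compl_eq_one_iff (measurable_pi_apply (X := fun _ : ℕ => 𝒳) 0 hA)]
    exact hstart Aᶜ hxA

lemma map_eval (x : 𝒳) (k : ℕ) : (M.law x).map (fun ω => ω k) = (M.K ^ k) x := by
  have h := M.map_eval_add_restrict x 0 k MeasurableSet.univ
  rwa [Measure.restrict_univ, map_eval_zero, Measure.dirac_bind (Kernel.measurable _),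
    zero_add] at h

theorem condExp_pair (x : 𝒳) (n k : ℕ) {F : 𝒳 × 𝒳 → ℝ} (hF : Measurable F)
    (hFi : Integrable (fun ω => F (ω n, ω (n + k))) (M.law x)) :
    (M.law x)[fun ω => F (ω n, ω (n + k)) | past 𝒳 n]
      =ᵐ[M.law x] fun ω => ∫ v, F (ω n, v) ∂((M.K ^ k) (ω n)) :=
  condExp_prodMk_eq_integral_kernel ((past 𝒳).le n) (measurable_eval_past le_rfl)
    (measurable_pi_apply _) (fun _ hB => M.map_eval_add_restrict x n k hB) hF hFi

end MarkovChain

/-! ### Geometric ergodicity -/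

section GeometricErgodicity

variable {α : Type*} [MeasurableSpace α] {μ ν : Measure α} {V : α → ℝ} {B : ℝ}

/-- The `V`-weighted distance between `μ` and `ν` is at most `B`, tested only on measurable
functions `f` with `0 < f ≤ V`. The integrals are Bochner integrals, so a test function which is not
integrable contributes `0`. -/
def WeightedDistLE (V : α → ℝ) (μ ν : Measure α) (B : ℝ) : Prop :=
  ∀ f : α → ℝ, Measurable f → (∀ y, 0 < f y) → (∀ y, f y ≤ V y) →
    |∫ y, f y ∂μ - ∫ y, f y ∂ν| ≤ B

lemma integrable_of_integral_min_le [IsFiniteMeasure μ] {f : α → ℝ} (hf : Measurable f)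
    (hf0 : ∀ a, 0 ≤ f a) {C : ℝ} (hC : ∀ m : ℕ, ∫ a, min (f a) (m + 1) ∂μ ≤ C) :
    Integrable f μ := by
  have hmin (m : ℕ) : Measurable fun a => min (f a) ((m : ℝ) + 1) := hf.min measurable_const
  have hmin0 (m : ℕ) (a : α) : 0 ≤ min (f a) ((m : ℝ) + 1) := le_min (hf0 a) (by positivity)
  have hmin_int (m : ℕ) : Integrable (fun a => min (f a) ((m : ℝ) + 1)) μ :=
    (integrable_const ((m : ℝ) + 1)).mono' (hmin m).aestronglyMeasurable
      (Eventually.of_forall fun a =>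
        (Real.norm_of_nonneg (hmin0 m a)).trans_le (min_le_right _ _))
  have hlim (a : α) : Tendsto (fun m : ℕ => min (f a) ((m : ℝ) + 1)) atTop (nhds (f a)) := by
    refine tendsto_const_nhds.congr' ?_
    filter_upwards [eventually_ge_atTop ⌈f a⌉₊] with m hm
    exact (min_eq_left ((Nat.ceil_le.1 hm).trans (by linarith))).symm
  have hnorm (m : ℕ) : eLpNorm (fun a => min (f a) ((m : ℝ) + 1)) 1 μ ≤ ENNReal.ofReal C := by
    rw [eLpNorm_one_eq_lintegral_enorm, ← ofReal_integral_norm_eq_lintegral_enorm (hmin_int m)]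
    simp only [Real.norm_of_nonneg (hmin0 m _)]
    exact ofReal_le_ofReal (hC m)
  rw [← memLp_one_iff_integrable]
  refine ⟨hf.aestronglyMeasurable, (Lp.eLpNorm_lim_le_liminf_eLpNorm
    (fun m => (hmin m).aestronglyMeasurable) f (Eventually.of_forall hlim)).trans_lt ?_⟩
  exact (liminf_le_of_frequently_le' (Frequently.of_forall hnorm)).trans_lt ofReal_lt_top

namespace WeightedDistLE

lemma integrable [IsFiniteMeasure μ] (hμν : WeightedDistLE V μ ν B) (hV : Measurable V)
    (hV0 : ∀ y, 0 < V y) (hVν : Integrable V ν) : Integrable V μ := by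
  refine integrable_of_integral_min_le hV (fun y => (hV0 y).le) (C := ∫ y, V y ∂ν + B) fun m => ?_
  have hpos (y : α) : 0 < min (V y) ((m : ℝ) + 1) := lt_min (hV0 y) (by positivity)
  have hle : ∫ y, min (V y) ((m : ℝ) + 1) ∂ν ≤ ∫ y, V y ∂ν :=
    integral_mono_of_nonneg (Eventually.of_forall fun y => (hpos y).le) hVν
      (Eventually.of_forall fun y => min_le_left _ _)
  linarith [(abs_le.1 (hμν _ (hV.min measurable_const) hpos fun y => min_le_left _ _)).2]

lemma abs_integral_sub_le_of_nonneg [IsFiniteMeasure μ] (hμν : WeightedDistLE V μ ν B)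
    (hV : Measurable V) (hV0 : ∀ y, 0 < V y) (hVν : Integrable V ν) {f : α → ℝ}
    (hf : Measurable f) (hf0 : ∀ y, 0 ≤ f y) (hfV : ∀ y, f y ≤ V y) :
    |∫ y, f y ∂μ - ∫ y, f y ∂ν| ≤ B := by
  have hVμ : Integrable V μ := hμν.integrable hV hV0 hVν
  have hf_norm (y : α) : ‖f y‖ ≤ V y := (Real.norm_of_nonneg (hf0 y)).trans_le (hfV y)
  have hfμ : Integrable f μ := hVμ.mono' hf.aestronglyMeasurable (Eventually.of_forall hf_norm)
  have hfν : Integrable f ν := hVν.mono' hf.aestronglyMeasurable (Eventually.of_forall hf_norm)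
  have hperturb {δ : ℝ} (hδ : δ ∈ Ioo (0 : ℝ) 1) :
      |(1 - δ) * (∫ y, f y ∂μ - ∫ y, f y ∂ν) + δ * (∫ y, V y ∂μ - ∫ y, V y ∂ν)| ≤ B := by
    have hδ1 : 0 ≤ 1 - δ := by linarith [hδ.2]
    have h := hμν (fun y => (1 - δ) * f y + δ * V y) ((hf.const_mul _).add (hV.const_mul _))
      (fun y => add_pos_of_nonneg_of_pos (mul_nonneg hδ1 (hf0 y)) (mul_pos hδ.1 (hV0 y)))
      (fun y => by linarith [mul_le_mul_of_nonneg_left (hfV y) hδ1])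
    rw [integral_add (hfμ.const_mul _) (hVμ.const_mul _),
      integral_add (hfν.const_mul _) (hVν.const_mul _)] at h
    simp only [integral_const_mul] at h
    convert h using 2
    ring
  have hlim : Tendsto (fun δ : ℝ =>
      |(1 - δ) * (∫ y, f y ∂μ - ∫ y, f y ∂ν) + δ * (∫ y, V y ∂μ - ∫ y, V y ∂ν)|)
      (nhdsWithin 0 (Ioi 0)) (nhds |∫ y, f y ∂μ - ∫ y, f y ∂ν|) := by
    refine (Continuous.tendsto' (by fun_prop) 0 _ ?_).mono_left nhdsWithin_le_nhds
    simp only [sub_zero, one_mul, zero_mul, add_zero]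
  exact le_of_tendsto hlim <| by
    filter_upwards [Ioo_mem_nhdsGT zero_lt_one] with δ hδ using hperturb hδ

lemma abs_integral_sub_le [IsFiniteMeasure μ] (hμν : WeightedDistLE V μ ν B) (hV : Measurable V)
    (hV0 : ∀ y, 0 < V y) (hVν : Integrable V ν) {f : α → ℝ} (hf : Measurable f)
    (hfV : ∀ y, |f y| ≤ V y) : |∫ y, f y ∂μ - ∫ y, f y ∂ν| ≤ 2 * B := by
  have hVμ : Integrable V μ := hμν.integrable hV hV0 hVν
  have hpos := hμν.abs_integral_sub_le_of_nonneg hV hV0 hVν (hf.max measurable_const)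
    (fun y => le_max_right (f y) 0) fun y => max_le ((le_abs_self _).trans (hfV y)) (hV0 y).le
  have hneg := hμν.abs_integral_sub_le_of_nonneg hV hV0 hVν (hf.neg.max measurable_const)
    (fun y => le_max_right (-f y) 0) fun y => max_le ((neg_le_abs _).trans (hfV y)) (hV0 y).le
  have hsplit {ρ : Measure α} (hVρ : Integrable V ρ) :
      ∫ y, f y ∂ρ = ∫ y, max (f y) 0 ∂ρ - ∫ y, max (-f y) 0 ∂ρ := by
    have hfρ : Integrable f ρ := hVρ.mono' hf.aestronglyMeasurable (Eventually.of_forall hfV)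
    rw [← integral_sub hfρ.pos_part hfρ.neg_part]
    exact integral_congr_ae (Eventually.of_forall fun y => by
      simpa only [posPart_def, negPart_def] using (posPart_sub_negPart (f y)).symm)
  simp only [Pi.neg_apply] at hneg
  rw [hsplit hVμ, hsplit hVν, sub_sub_sub_comm]
  linarith [abs_sub (∫ y, max (f y) 0 ∂μ - ∫ y, max (f y) 0 ∂ν)
    (∫ y, max (-f y) 0 ∂μ - ∫ y, max (-f y) 0 ∂ν)]

end WeightedDistLE

lemma sum_exp_neg_mul_le {κ : ℝ} (hκ : 0 < κ) (m : ℕ) :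
    ∑ k ∈ Finset.range m, Real.exp (-κ * k) ≤ Real.exp κ / (Real.exp κ - 1) := by
  have hlt : Real.exp (-κ) < 1 := Real.exp_lt_one_iff.2 (neg_lt_zero.2 hκ)
  calc ∑ k ∈ Finset.range m, Real.exp (-κ * k)
      = ∑ k ∈ Finset.range m, Real.exp (-κ) ^ k := by
        simp only [← Real.exp_nat_mul, mul_comm]
    _ ≤ ∑' k : ℕ, Real.exp (-κ) ^ k :=
        (summable_geometric_of_lt_one (Real.exp_pos _).le hlt).sum_le_tsum _
          fun k _ => pow_nonneg (Real.exp_pos _).le k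
    _ = (1 - Real.exp (-κ))⁻¹ := tsum_geometric_of_lt_one (Real.exp_pos _).le hlt
    _ = Real.exp κ / (Real.exp κ - 1) := by
        rw [Real.exp_neg, ← inv_div, sub_div, div_self (Real.exp_pos κ).ne', one_div]

/-- Condition (B1) for a transition kernel `P`: the law after `n` steps from `x` approaches `lam` at
rate `R V(x) e^{-κn}` in the `V`-weighted distance. -/
def IsGeometricallyErgodic (P : Kernel α α) (V : α → ℝ) (lam : Measure α) (R κ : ℝ) : Prop :=
  ∀ (n : ℕ) (x : α), WeightedDistLE V ((P ^ n) x) lam (R * V x * Real.exp (-κ * n))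

namespace IsGeometricallyErgodic

variable {P : Kernel α α} [IsMarkovKernel P] {lam : Measure α} {R κ : ℝ}

lemma abs_integral_pow_sub_le (hP : IsGeometricallyErgodic P V lam R κ) (hV : Measurable V)
    (hV0 : ∀ y, 0 < V y) (hVlam : Integrable V lam) {f : α → ℝ} (hf : Measurable f)
    (hfV : ∀ y, |f y| ≤ V y) (n : ℕ) (x : α) :
    |∫ y, (f y - ∫ z, f z ∂lam) ∂((P ^ n) x)| ≤ 2 * R * V x * Real.exp (-κ * n) := by
  have hfP : Integrable f ((P ^ n) x) := ((hP n x).integrable hV hV0 hVlam).mono'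
    hf.aestronglyMeasurable (Eventually.of_forall hfV)
  rw [integral_sub hfP (integrable_const _), integral_const, probReal_univ, one_smul]
  linarith [(hP n x).abs_integral_sub_le hV hV0 hVlam hf hfV]

lemma abs_sub_integral_le (hP : IsGeometricallyErgodic P V lam R κ) (hV : Measurable V)
    (hV0 : ∀ y, 0 < V y) (hVlam : Integrable V lam) {f : α → ℝ} (hf : Measurable f)
    (hfV : ∀ y, |f y| ≤ V y) (x : α) : |f x - ∫ z, f z ∂lam| ≤ 2 * R * V x := by
  have h := hP.abs_integral_pow_sub_le hV hV0 hVlam hf hfV 0 x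
  have hdirac : (P ^ 0) x = Measure.dirac x := Kernel.id_apply x
  rwa [hdirac, integral_dirac' _ _ (hf.sub_const _).stronglyMeasurable, Nat.cast_zero, mul_zero,
    Real.exp_zero, mul_one] at h

lemma abs_sum_integral_pow_sub_le (hP : IsGeometricallyErgodic P V lam R κ) (hR : 0 ≤ R)
    (hκ : 0 < κ) (hV : Measurable V) (hV0 : ∀ y, 0 < V y) (hVlam : Integrable V lam) {f : α → ℝ}
    (hf : Measurable f) (hfV : ∀ y, |f y| ≤ V y) (m : ℕ) (x : α) :
    |∑ k ∈ Finset.range m, ∫ y, (f y - ∫ z, f z ∂lam) ∂((P ^ k) x)|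
      ≤ 2 * R * V x * (Real.exp κ / (Real.exp κ - 1)) := by
  have hV0x := (hV0 x).le
  calc |∑ k ∈ Finset.range m, ∫ y, (f y - ∫ z, f z ∂lam) ∂((P ^ k) x)|
      ≤ ∑ k ∈ Finset.range m, 2 * R * V x * Real.exp (-κ * k) :=
        (Finset.abs_sum_le_sum_abs _ _).trans <| Finset.sum_le_sum fun k _ =>
          hP.abs_integral_pow_sub_le hV hV0 hVlam hf hfV k x
    _ = 2 * R * V x * ∑ k ∈ Finset.range m, Real.exp (-κ * k) := (Finset.mul_sum _ _ _).symm
    _ ≤ 2 * R * V x * (Real.exp κ / (Real.exp κ - 1)) := by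
        gcongr
        exact sum_exp_neg_mul_le hκ m

end IsGeometricallyErgodic

end GeometricErgodicity

/-! ### Additive functionals of the chain -/

section WeightedMoments

variable {Ω : Type*} [MeasurableSpace Ω] {μ : Measure Ω} {r : ℝ}

lemma memLp_and_integral_le_of_lintegral_le {f : Ω → ℝ} (hr : 0 < r)
    (hf : AEStronglyMeasurable f μ) {C : ℝ≥0∞} (hC : C < ⊤)
    (hfC : ∫⁻ ω, ENNReal.ofReal (|f ω| ^ r) ∂μ ≤ C) :
    MemLp f (ENNReal.ofReal r) μ ∧ ∫ ω, |f ω| ^ r ∂μ ≤ C.toReal := by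
  have hmeas : AEStronglyMeasurable (fun ω => |f ω| ^ r) μ :=
    (continuous_abs_rpow hr.le).comp_aestronglyMeasurable hf
  have hnonneg : 0 ≤ᵐ[μ] fun ω => |f ω| ^ r := Eventually.of_forall fun ω => by positivity
  constructor
  · exact (memLp_ofReal_iff_integrable_abs_rpow hr hf).2
      ⟨hmeas, (hasFiniteIntegral_iff_ofReal hnonneg).2 (hfC.trans_lt hC)⟩
  · rw [integral_eq_lintegral_of_nonneg_ae hnonneg hmeas]
    exact toReal_mono hC.ne hfC

lemma one_div_rpow_one_sub {a : ℝ} (ha : 0 ≤ a) (r : ℝ) : (1 / a) ^ (1 - r) = a ^ (r - 1) := by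
  rw [one_div, Real.inv_rpow ha, ← Real.rpow_neg ha, neg_sub]

lemma abs_add_rpow_le_weighted (hr : 1 ≤ r) {w : ℝ} (hw0 : 0 < w) (hw1 : w < 1) (a b : ℝ) :
    |a + b| ^ r ≤ w ^ (1 - r) * |a| ^ r + (1 - w) ^ (1 - r) * |b| ^ r := by
  have hw' : 0 < 1 - w := sub_pos.2 hw1
  have hscale {v : ℝ} (hv : 0 < v) (c : ℝ) : v * |v⁻¹ * c| ^ r = v ^ (1 - r) * |c| ^ r := by
    rw [abs_mul, abs_of_pos (inv_pos.2 hv), Real.mul_rpow (by positivity) (abs_nonneg c),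
      Real.inv_rpow hv.le, Real.rpow_sub hv, Real.rpow_one]
    ring
  have hconvex := (convexOn_abs_rpow hr).2 (mem_univ (w⁻¹ * a)) (mem_univ ((1 - w)⁻¹ * b)) hw0.le
    hw'.le (add_sub_cancel _ _)
  simpa only [smul_eq_mul, mul_inv_cancel_left₀ hw0.ne', mul_inv_cancel_left₀ hw'.ne',
    hscale hw0, hscale hw'] using hconvex

lemma integral_abs_add_rpow_le_weighted (hr : 1 ≤ r) {w : ℝ} (hw0 : 0 < w) (hw1 : w < 1)
    {A B : Ω → ℝ} (hA : MemLp A (ENNReal.ofReal r) μ) (hB : MemLp B (ENNReal.ofReal r) μ) :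
    ∫ ω, |A ω + B ω| ^ r ∂μ
      ≤ w ^ (1 - r) * ∫ ω, |A ω| ^ r ∂μ + (1 - w) ^ (1 - r) * ∫ ω, |B ω| ^ r ∂μ := by
  have hr0 : 0 < r := by linarith
  have hAi := (integrable_abs_rpow_of_memLp hr0 hA).const_mul (w ^ (1 - r))
  have hBi := (integrable_abs_rpow_of_memLp hr0 hB).const_mul ((1 - w) ^ (1 - r))
  rw [← integral_const_mul, ← integral_const_mul, ← integral_add hAi hBi]
  exact integral_mono (integrable_abs_rpow_of_memLp hr0 (hA.add hB)) (hAi.add hBi)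
    fun ω => abs_add_rpow_le_weighted hr hw0 hw1 (A ω) (B ω)

end WeightedMoments

namespace MarkovChain

variable {𝒳 : Type} [MeasurableSpace 𝒳] (M : MarkovChain 𝒳) {V : 𝒳 → ℝ} {g : 𝒳 → 𝒳 → ℝ}
  {x : 𝒳} {r : ℝ}

lemma isGeometricallyErgodic_of_law {lam : Measure 𝒳} {R κ : ℝ}
    (hlaw : ∀ (n : ℕ) (x : 𝒳) (f : 𝒳 → ℝ), Measurable f → (∀ y, 0 < f y) → (∀ y, f y ≤ V y) →
      |(∫ ω, f (ω n) ∂(M.law x)) - ∫ y, f y ∂lam| ≤ R * V x * Real.exp (-κ * n)) :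
    IsGeometricallyErgodic M.K V lam R κ := fun n x f hf hf0 hfV => by
  rw [← M.map_eval, integral_map (measurable_pi_apply n).aemeasurable hf.aestronglyMeasurable]
  exact hlaw n x f hf hf0 hfV

lemma memLp_eval_and_integral_le_upsStar (hr : 0 < r) (hV : Measurable V) (hV0 : ∀ y, 0 ≤ V y)
    (hυ : M.upsStar V r x < ⊤) (i : ℕ) :
    MemLp (fun ω => V (ω i)) (ENNReal.ofReal r) (M.law x) ∧
      ∫ ω, |V (ω i)| ^ r ∂(M.law x) ≤ (M.upsStar V r x).toReal := by
  refine memLp_and_integral_le_of_lintegral_le (f := fun ω : ℕ → 𝒳 => V (ω i)) hr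
    (hV.comp (measurable_pi_apply i)).aestronglyMeasurable hυ ?_
  simp only [abs_of_nonneg (hV0 _)]
  exact le_iSup (fun n : ℕ => ∫⁻ ω, ENNReal.ofReal (V (ω n) ^ r) ∂(M.law x)) i

lemma memLp_pair_and_integral_le_gStar (hr : 0 < r)
    (hg : Measurable fun q : 𝒳 × 𝒳 => g q.1 q.2) (hγ : M.gStar g r x < ⊤) (i : ℕ) :
    MemLp (fun ω => g (ω (i + 1)) (ω i)) (ENNReal.ofReal r) (M.law x) ∧
      ∫ ω, |g (ω (i + 1)) (ω i)| ^ r ∂(M.law x) ≤ (M.gStar g r x).toReal :=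
  have hpair : Measurable fun ω : ℕ → 𝒳 => g (ω (i + 1)) (ω i) :=
    hg.comp (f := fun ω : ℕ → 𝒳 => (ω (i + 1), ω i)) (by fun_prop)
  memLp_and_integral_le_of_lintegral_le hr hpair.aestronglyMeasurable hγ
    (le_iSup (fun j : ℕ => ∫⁻ ω, ENNReal.ofReal (|g (ω (j + 1)) (ω j)| ^ r) ∂(M.law x)) i)

lemma measurable_gtilde (hg : Measurable fun q : 𝒳 × 𝒳 => g q.1 q.2) : Measurable (M.gtilde g) :=
  ((hg.comp measurable_swap).stronglyMeasurable.integral_kernel_prod_right' (κ := M.K)).measurable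

section AdditiveFunctional

variable {lam : Measure 𝒳} {R κ : ℝ} {f : 𝒳 → ℝ}

lemma condExp_sum_sub (hf : Measurable f) (hfi : ∀ i, Integrable (fun ω => f (ω i)) (M.law x))
    (c : ℝ) {j l : ℕ} :
    (M.law x)[∑ i ∈ Finset.Ico j l, fun ω => f (ω i) - c | past 𝒳 j]
      =ᵐ[M.law x] fun ω => ∑ k ∈ Finset.range (l - j), ∫ y, (f y - c) ∂((M.K ^ k) (ω j)) := by
  have hint (i : ℕ) : Integrable (fun ω => f (ω i) - c) (M.law x) :=
    (hfi i).sub (integrable_const c)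
  have hterm : ∀ᵐ ω ∂(M.law x), ∀ k, ((M.law x)[fun ω => f (ω (j + k)) - c | past 𝒳 j]) ω
      = ∫ y, (f y - c) ∂((M.K ^ k) (ω j)) :=
    ae_all_iff.2 fun k => M.condExp_pair x j k (F := fun p => f p.2 - c)
      ((hf.comp measurable_snd).sub_const c) (hint (j + k))
  rw [Finset.sum_Ico_eq_sum_range]
  filter_upwards [condExp_finsetSum (μ := M.law x) (s := Finset.range (l - j))
    (fun k _ => hint (j + k)) (past 𝒳 j), hterm] with ω hsum hterm
  rw [hsum, Finset.sum_apply]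
  exact Finset.sum_congr rfl fun k _ => hterm k

lemma mul_condExp_sum_sub_le (hK : IsGeometricallyErgodic M.K V lam R κ) (hR : 0 ≤ R) (hκ : 0 < κ)
    (hV : Measurable V) (hV0 : ∀ y, 0 < V y) (hVlam : Integrable V lam) (hf : Measurable f)
    (hfV : ∀ y, |f y| ≤ V y) (hfi : ∀ i, Integrable (fun ω => f (ω i)) (M.law x)) (j l : ℕ) :
    (fun ω => f (ω j) - ∫ y, f y ∂lam)
        * (M.law x)[∑ i ∈ Finset.Ico j l, fun ω => f (ω i) - ∫ y, f y ∂lam | past 𝒳 j]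
      ≤ᵐ[M.law x] (fun ω => 2 * R * √(Real.exp κ / (Real.exp κ - 1)) * V (ω j)) ^ 2 := by
  have hq : 0 ≤ Real.exp κ / (Real.exp κ - 1) := by simpa using sum_exp_neg_mul_le hκ 0
  filter_upwards [M.condExp_sum_sub hf hfi (∫ y, f y ∂lam)] with ω hω
  have hcurrent := hK.abs_sub_integral_le hV hV0 hVlam hf hfV (ω j)
  have hfuture := hK.abs_sum_integral_pow_sub_le hR hκ hV hV0 hVlam hf hfV (l - j) (ω j)
  rw [Pi.mul_apply, Pi.pow_apply, hω]
  refine (le_abs_self _).trans ?_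
  rw [abs_mul]
  refine (mul_le_mul hcurrent hfuture (abs_nonneg _) ((abs_nonneg _).trans hcurrent)).trans_eq ?_
  rw [mul_pow, mul_pow, Real.sq_sqrt hq]
  ring

lemma memLp_sub_of_abs_le (hf : Measurable f) (hfV : ∀ y, |f y| ≤ V y)
    (hVr : ∀ i, MemLp (fun ω => V (ω i)) (ENNReal.ofReal r) (M.law x)) (c : ℝ) (i : ℕ) :
    MemLp (fun ω => f (ω i) - c) (ENNReal.ofReal r) (M.law x) :=
  ((hVr i).mono' (hf.comp (measurable_pi_apply i)).aestronglyMeasurable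
    (Eventually.of_forall fun ω => hfV (ω i))).sub (memLp_const c)

theorem integral_abs_sum_sub_integral_rpow_le (hr : 2 ≤ r)
    (hK : IsGeometricallyErgodic M.K V lam R κ) (hR : 0 ≤ R) (hκ : 0 < κ)
    (hV : Measurable V) (hV0 : ∀ y, 0 < V y) (hVlam : Integrable V lam) (hf : Measurable f)
    (hfV : ∀ y, |f y| ≤ V y)
    (hVr : ∀ i, MemLp (fun ω => V (ω i)) (ENNReal.ofReal r) (M.law x)) {υ : ℝ}
    (hυ : ∀ i, ∫ ω, |V (ω i)| ^ r ∂(M.law x) ≤ υ) (n : ℕ) :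
    ∫ ω, |∑ i ∈ Finset.range n, (f (ω i) - ∫ y, f y ∂lam)| ^ r ∂(M.law x)
      ≤ (2 * (r - 1) * n) ^ (r / 2)
        * ((4 * (R ^ 2 * (Real.exp κ / (Real.exp κ - 1)))) ^ (r / 2) * υ) := by
  set q := Real.exp κ / (Real.exp κ - 1)
  have hq : 0 ≤ q := by simpa using sum_exp_neg_mul_le hκ 0
  have hC0 : 0 ≤ 2 * R * √q := by positivity
  have hCr : (2 * R * √q) ^ r = (4 * (R ^ 2 * q)) ^ (r / 2) := by
    rw [← Real.sq_sqrt hq, Real.sqrt_sq (Real.sqrt_nonneg q),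
      show 4 * (R ^ 2 * √q ^ 2) = (2 * R * √q) ^ (2 : ℝ) by rw [Real.rpow_two]; ring,
      ← Real.rpow_mul hC0, mul_div_cancel₀ _ two_ne_zero]
  have hfr := M.memLp_sub_of_abs_le hf hfV hVr
  have hfi (i : ℕ) : Integrable (fun ω => f (ω i)) (M.law x) := by
    simpa only [sub_zero] using (hfr 0 i).integrable (one_le_ofReal.2 (by linarith))
  have hadapted : StronglyAdapted (past 𝒳) fun i ω => f (ω i) - ∫ y, f y ∂lam := fun i =>
    ((hf.comp (measurable_eval_past le_rfl)).sub_const _).stronglyMeasurable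
  refine integral_abs_sum_rpow_le_of_mul_condExp_sum_le
    (H := fun (i : ℕ) (ω : ℕ → 𝒳) => 2 * R * √q * V (ω i)) hr hadapted (hfr _)
    (fun i => (hVr i).const_mul _)
    (fun j l _ => M.mul_condExp_sum_sub_le hK hR hκ hV hV0 hVlam hf hfV hfi j l) (fun i => ?_) n
  simp only [abs_mul, abs_of_nonneg hC0, Real.mul_rpow hC0 (abs_nonneg _)]
  rw [integral_const_mul, hCr]
  gcongr
  exact hυ i

end AdditiveFunctional

/-- The filtration `i ↦ σ(X_0, …, X_{i+1})`, to which the increments `g(X_{i+1}, X_i)` are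
adapted. -/
def pastSucc (𝒳 : Type) [MeasurableSpace 𝒳] :
    Filtration ℕ (inferInstance : MeasurableSpace (ℕ → 𝒳)) where
  seq i := past 𝒳 (i + 1)
  mono' _ _ hij := (past 𝒳).mono (Nat.succ_le_succ hij)
  le' i := (past 𝒳).le (i + 1)

lemma condExp_sub_gtilde_eq_zero (hg : Measurable fun q : 𝒳 × 𝒳 => g q.1 q.2)
    (hgK : ∀ u, Integrable (fun v => g v u) (M.K u)) (n : ℕ)
    (hint : Integrable (fun ω => g (ω (n + 1)) (ω n) - M.gtilde g (ω n)) (M.law x)) :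
    (M.law x)[fun ω => g (ω (n + 1)) (ω n) - M.gtilde g (ω n) | past 𝒳 n] =ᵐ[M.law x] 0 := by
  refine (M.condExp_pair x n 1 (F := fun p => g p.2 p.1 - M.gtilde g p.1)
    ((hg.comp measurable_swap).sub ((M.measurable_gtilde hg).comp measurable_fst)) hint).trans
    (Eventually.of_forall fun ω => ?_)
  simp only [pow_one, Pi.zero_apply]
  rw [integral_sub (hgK _) (integrable_const _), integral_const, probReal_univ, one_smul]
  exact sub_self (M.gtilde g (ω n))

lemma stronglyAdapted_sub_gtilde (hg : Measurable fun q : 𝒳 × 𝒳 => g q.1 q.2) :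
    StronglyAdapted (pastSucc 𝒳) fun i ω => g (ω (i + 1)) (ω i) - M.gtilde g (ω i) := fun i =>
  have hcurrent : Measurable[past 𝒳 (i + 1)] fun ω : ℕ → 𝒳 => ω i :=
    measurable_eval_past i.le_succ
  ((hg.comp ((measurable_eval_past le_rfl).prodMk hcurrent)).sub
    ((M.measurable_gtilde hg).comp hcurrent)).stronglyMeasurable

theorem integral_abs_sum_sub_gtilde_rpow_le (hr : 2 ≤ r)
    (hg : Measurable fun q : 𝒳 × 𝒳 => g q.1 q.2)
    (hgK : ∀ u, Integrable (fun v => g v u) (M.K u))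
    (hgr : ∀ i, MemLp (fun ω => g (ω (i + 1)) (ω i)) (ENNReal.ofReal r) (M.law x))
    (hgtr : ∀ i, MemLp (fun ω => M.gtilde g (ω i)) (ENNReal.ofReal r) (M.law x)) {γ υ : ℝ}
    (hγ : ∀ i, ∫ ω, |g (ω (i + 1)) (ω i)| ^ r ∂(M.law x) ≤ γ)
    (hυ : ∀ i, ∫ ω, |M.gtilde g (ω i)| ^ r ∂(M.law x) ≤ υ) (n : ℕ) :
    ∫ ω, |∑ i ∈ Finset.range n, (g (ω (i + 1)) (ω i) - M.gtilde g (ω i))| ^ r ∂(M.law x)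
      ≤ (2 * (r - 1) * n) ^ (r / 2) * (2 ^ (r - 1) * (γ + υ)) := by
  have hYr (i : ℕ) := (hgr i).sub (hgtr i)
  refine integral_abs_sum_rpow_le_of_condExp_succ_eq_zero (ℱ := pastSucc 𝒳) hr
    (M.stronglyAdapted_sub_gtilde hg) hYr (fun i => M.condExp_sub_gtilde_eq_zero hg hgK (i + 1)
      ((hYr (i + 1)).integrable (one_le_ofReal.2 (by linarith)))) (fun i => ?_) n
  have hweighted := integral_abs_add_rpow_le_weighted (by linarith) (w := 1 / 2) (by norm_num)
    (by norm_num) (hgr i) (hgtr i).neg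
  simp only [Pi.neg_apply, abs_neg, ← sub_eq_add_neg] at hweighted
  rw [show (1 : ℝ) - 1 / 2 = 1 / 2 by norm_num, one_div_rpow_one_sub zero_le_two,
    ← mul_add] at hweighted
  exact hweighted.trans (mul_le_mul_of_nonneg_left (add_le_add (hγ i) (hυ i)) (by positivity))

end MarkovChain

section Constants

variable {r : ℝ}

lemma four_rpow_half (r : ℝ) : (4 : ℝ) ^ (r / 2) = 2 ^ r := by
  rw [show (4 : ℝ) = 2 ^ (2 : ℝ) by norm_num, ← Real.rpow_mul zero_le_two,
    mul_div_cancel₀ r two_ne_zero]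

lemma martingale_constant_le (hr : 1 ≤ r) :
    (2 * (r - 1)) ^ (r / 2) * 2 ^ (r - 1) ≤ (16 * r) ^ (r / 2) := by
  have hbase : 0 ≤ 2 * (r - 1) := by linarith
  calc (2 * (r - 1)) ^ (r / 2) * 2 ^ (r - 1) ≤ (2 * (r - 1)) ^ (r / 2) * 2 ^ r := by
        gcongr
        · exact one_le_two
        · linarith
    _ = (2 * (r - 1) * 4) ^ (r / 2) := by
        rw [← four_rpow_half, ← Real.mul_rpow hbase zero_le_four]
    _ ≤ (16 * r) ^ (r / 2) :=
        Real.rpow_le_rpow (by positivity) (by linarith) (by linarith)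

lemma one_sub_one_div_rpow_half_le (hr : 1 ≤ r) : (1 - 1 / r) ^ (r / 2) ≤ 2 / 3 := by
  have hr0 : 0 < r := by linarith
  have hbase : 0 ≤ 1 - 1 / r := sub_nonneg.2 ((div_le_one hr0).2 hr)
  have hexp : (3 / 2 : ℝ) ≤ Real.exp (1 / 2) := by linarith [Real.add_one_le_exp (1 / 2 : ℝ)]
  calc (1 - 1 / r) ^ (r / 2) ≤ Real.exp (-(1 / r)) ^ (r / 2) := by
        gcongr
        exact Real.one_sub_le_exp_neg (1 / r)
    _ = (Real.exp (1 / 2))⁻¹ := by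
        rw [← Real.exp_mul, ← Real.exp_neg]
        congr 1
        field_simp
    _ ≤ (3 / 2)⁻¹ := inv_anti₀ (by norm_num) hexp
    _ = 2 / 3 := by norm_num

lemma three_quarters_rpow_mul_two_rpow (r : ℝ) :
    (3 / 4 : ℝ) ^ (1 - r) * 2 ^ (r - 1) * (3 / 2) ^ (r - 1) = 4 ^ (r - 1) := by
  rw [show (3 / 4 : ℝ) = 1 / (4 / 3) by norm_num, one_div_rpow_one_sub (by norm_num),
    ← Real.mul_rpow (by norm_num) (by norm_num), ← Real.mul_rpow (by norm_num) (by norm_num)]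
  norm_num

lemma drift_constant_le (hr : 2 ≤ r) {a : ℝ} (ha : 0 ≤ a) :
    (3 / 4 : ℝ) ^ (1 - r) * ((2 * (r - 1)) ^ (r / 2) * (4 * a) ^ (r / 2))
      ≤ 4 ^ (r - 1) * (2 * r * a) ^ (r / 2) := by
  have hr0 : 0 < r := by linarith
  have hr1 : 0 ≤ r - 1 := by linarith
  have hbase : 0 ≤ 1 - 1 / r := sub_nonneg.2 ((div_le_one hr0).2 (by linarith))
  have hfactor : (2 * (r - 1)) ^ (r / 2) * (4 * a) ^ (r / 2)
      = (2 * r * a) ^ (r / 2) * ((1 - 1 / r) ^ (r / 2) * (2 * 2 ^ (r - 1))) := by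
    have htwo : (2 : ℝ) * 2 ^ (r - 1) = 4 ^ (r / 2) := by
      rw [four_rpow_half, Real.rpow_sub_one two_ne_zero, mul_div_cancel₀ _ two_ne_zero]
    rw [htwo, ← Real.mul_rpow (by positivity) (by positivity), ← Real.mul_rpow hbase zero_le_four,
      ← Real.mul_rpow (by positivity) (by positivity)]
    congr 1
    field_simp
  have hgain : 2 * (1 - 1 / r) ^ (r / 2) ≤ (3 / 2 : ℝ) ^ (r - 1) := by
    have hself : (3 / 2 : ℝ) ≤ (3 / 2) ^ (r - 1) :=
      Real.self_le_rpow_of_one_le (by norm_num) (by linarith)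
    linarith [one_sub_one_div_rpow_half_le (r := r) (by linarith)]
  calc (3 / 4 : ℝ) ^ (1 - r) * ((2 * (r - 1)) ^ (r / 2) * (4 * a) ^ (r / 2))
      = (3 / 4 : ℝ) ^ (1 - r) * 2 ^ (r - 1) * (2 * r * a) ^ (r / 2)
          * (2 * (1 - 1 / r) ^ (r / 2)) := by
        rw [hfactor]
        ring
    _ ≤ (3 / 4 : ℝ) ^ (1 - r) * 2 ^ (r - 1) * (2 * r * a) ^ (r / 2) * (3 / 2 : ℝ) ^ (r - 1) := by
        gcongr
    _ = 4 ^ (r - 1) * (2 * r * a) ^ (r / 2) := by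
        rw [← three_quarters_rpow_mul_two_rpow]
        ring

lemma mul_add_add_mul_le {a b d u v : ℝ} (ha : 0 ≤ a) (hb : 0 ≤ b) (hd : 0 ≤ d) (hu : 0 ≤ u)
    (hv : 0 ≤ v) : b * (v + u) + a * u ≤ (1 + a + d + b) * (1 + u + v) := by
  have hab : 0 ≤ a * (1 + v) + b := by positivity
  have hd1 : 0 ≤ (1 + d) * (1 + u + v) := by positivity
  linarith

end Constants

section Average

variable {Ω : Type*} [MeasurableSpace Ω] {μ : Measure Ω}

lemma abs_sum_div_sub_rpow {n : ℕ} (hn : 0 < n) (a : ℕ → ℝ) (c r : ℝ) :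
    |(∑ j ∈ Finset.range n, a j) / n - c| ^ r
      = |∑ j ∈ Finset.range n, (a j - c)| ^ r / (n : ℝ) ^ r := by
  have hn0 : (0 : ℝ) < n := Nat.cast_pos.2 hn
  rw [← Real.div_rpow (abs_nonneg _) hn0.le, Finset.sum_sub_distrib, Finset.sum_const,
    Finset.card_range, nsmul_eq_mul, div_sub' hn0.ne', abs_div, abs_of_pos hn0]

lemma lintegral_ofReal_abs_average_sub_rpow_le [IsFiniteMeasure μ] {r : ℝ} (hr : 0 < r)
    {Z : ℕ → Ω → ℝ} (hZ : ∀ i, MemLp (Z i) (ENNReal.ofReal r) μ) {n : ℕ} (hn : 0 < n) {c C : ℝ}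
    (hC : ∫ ω, |∑ i ∈ Finset.range n, (Z i ω - c)| ^ r ∂μ ≤ (n : ℝ) ^ (r / 2) * C) :
    ∫⁻ ω, ENNReal.ofReal (|(∑ i ∈ Finset.range n, Z i ω) / n - c| ^ r) ∂μ
      ≤ ENNReal.ofReal (C / (n : ℝ) ^ (r / 2)) := by
  have hn0 : (0 : ℝ) < n := Nat.cast_pos.2 hn
  have hint : Integrable (fun ω => |∑ i ∈ Finset.range n, (Z i ω - c)| ^ r) μ :=
    integrable_abs_rpow_of_memLp hr
      (memLp_finsetSum (Finset.range n) fun i _ => (hZ i).sub (memLp_const c))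
  simp only [abs_sum_div_sub_rpow hn (fun i => Z i _)]
  rw [← ofReal_integral_eq_lintegral_ofReal (hint.div_const _)
    (Eventually.of_forall fun ω => by positivity), integral_div]
  refine ENNReal.ofReal_le_ofReal ?_
  have hpow : (n : ℝ) ^ r = (n : ℝ) ^ (r / 2) * (n : ℝ) ^ (r / 2) := by
    rw [← Real.rpow_add hn0, add_halves]
  rwa [hpow, ← div_div, div_le_div_iff_of_pos_right (by positivity), div_le_iff₀' (by positivity)]

end Average

lemma ofReal_mul_one_add_toReal_div {W : ℝ} (hW : 0 ≤ W) {a b : ℝ≥0∞} (ha : a ≠ ⊤) (hb : b ≠ ⊤)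
    {n : ℕ} (hn : 0 < n) (s : ℝ) :
    ENNReal.ofReal (W * (1 + a.toReal + b.toReal) / (n : ℝ) ^ s)
      = ENNReal.ofReal W * (1 + a + b) / (n : ℝ≥0∞) ^ s := by
  have hn0 : (0 : ℝ) < n := Nat.cast_pos.2 hn
  rw [ENNReal.ofReal_div_of_pos (by positivity), ENNReal.ofReal_mul hW,
    ENNReal.ofReal_add (by positivity) toReal_nonneg, ENNReal.ofReal_add zero_le_one toReal_nonneg,
    ENNReal.ofReal_one, ENNReal.ofReal_toReal ha, ENNReal.ofReal_toReal hb,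
    ← ENNReal.ofReal_rpow_of_pos hn0, ENNReal.ofReal_natCast]

namespace MarkovChain

variable {𝒳 : Type} [MeasurableSpace 𝒳] (M : MarkovChain 𝒳) {V : 𝒳 → ℝ} {g : 𝒳 → 𝒳 → ℝ}
  {x : 𝒳} {r : ℝ} {lam : Measure 𝒳} {R κ : ℝ}

lemma integral_abs_sum_pair_sub_rpow_le_add (hr : 1 ≤ r)
    (hgr : ∀ i, MemLp (fun ω => g (ω (i + 1)) (ω i)) (ENNReal.ofReal r) (M.law x))
    (hgtr : ∀ i, MemLp (fun ω => M.gtilde g (ω i)) (ENNReal.ofReal r) (M.law x)) (c : ℝ) (n : ℕ) :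
    ∫ ω, |∑ i ∈ Finset.range n, (g (ω (i + 1)) (ω i) - c)| ^ r ∂(M.law x)
      ≤ 4 ^ (r - 1)
          * ∫ ω, |∑ i ∈ Finset.range n, (g (ω (i + 1)) (ω i) - M.gtilde g (ω i))| ^ r ∂(M.law x)
        + (3 / 4) ^ (1 - r)
          * ∫ ω, |∑ i ∈ Finset.range n, (M.gtilde g (ω i) - c)| ^ r ∂(M.law x) := by
  have hsplit := integral_abs_add_rpow_le_weighted hr (w := 1 / 4) (by norm_num)
    (by norm_num) (memLp_finsetSum (Finset.range n) fun i _ => (hgr i).sub (hgtr i))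
    (memLp_finsetSum (Finset.range n) fun i _ => (hgtr i).sub (memLp_const c))
  simp only [Pi.sub_apply, ← Finset.sum_add_distrib, sub_add_sub_cancel] at hsplit
  rwa [one_div_rpow_one_sub zero_le_four, show (1 : ℝ) - 1 / 4 = 3 / 4 by norm_num] at hsplit

theorem integral_abs_sum_pair_sub_rpow_le (hr : 2 ≤ r)
    (hK : IsGeometricallyErgodic M.K V lam R κ) (hR : 0 ≤ R) (hκ : 0 < κ)
    (hV : Measurable V) (hV0 : ∀ y, 0 < V y) (hVlam : Integrable V lam)
    (hg : Measurable fun q : 𝒳 × 𝒳 => g q.1 q.2) (hgK : ∀ u, Integrable (fun v => g v u) (M.K u))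
    (hgV : ∀ y, |M.gtilde g y| ≤ V y)
    (hVr : ∀ i, MemLp (fun ω => V (ω i)) (ENNReal.ofReal r) (M.law x))
    (hgr : ∀ i, MemLp (fun ω => g (ω (i + 1)) (ω i)) (ENNReal.ofReal r) (M.law x)) {υ γ : ℝ}
    (hυ : ∀ i, ∫ ω, |V (ω i)| ^ r ∂(M.law x) ≤ υ)
    (hγ : ∀ i, ∫ ω, |g (ω (i + 1)) (ω i)| ^ r ∂(M.law x) ≤ γ) (n : ℕ) :
    ∫ ω, |∑ i ∈ Finset.range n, (g (ω (i + 1)) (ω i) - ∫ y, M.gtilde g y ∂lam)| ^ r ∂(M.law x)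
      ≤ (n : ℝ) ^ (r / 2) * (4 ^ (r - 1) * ((16 * r) ^ (r / 2) * (γ + υ)
        + (2 * r * (R ^ 2 * (Real.exp κ / (Real.exp κ - 1)))) ^ (r / 2) * υ)) := by
  set c := ∫ y, M.gtilde g y ∂lam
  set q := Real.exp κ / (Real.exp κ - 1)
  have hr0 : 0 < r := by linarith
  have hr1 : 0 ≤ r - 1 := by linarith
  have hq : 0 ≤ q := by simpa using sum_exp_neg_mul_le hκ 0
  have hυ0 : 0 ≤ υ := (integral_nonneg fun ω => by positivity).trans (hυ 0)
  have hγ0 : 0 ≤ γ := (integral_nonneg fun ω => by positivity).trans (hγ 0)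
  have hgt := M.measurable_gtilde hg
  have hgtr (i : ℕ) : MemLp (fun ω => M.gtilde g (ω i)) (ENNReal.ofReal r) (M.law x) := by
    simpa only [sub_zero] using M.memLp_sub_of_abs_le hgt hgV hVr 0 i
  have hgtυ (i : ℕ) : ∫ ω, |M.gtilde g (ω i)| ^ r ∂(M.law x) ≤ υ :=
    (integral_mono (integrable_abs_rpow_of_memLp hr0 (hgtr i))
      (integrable_abs_rpow_of_memLp hr0 (hVr i)) fun ω =>
        Real.rpow_le_rpow (abs_nonneg _) ((hgV (ω i)).trans (le_abs_self _)) hr0.le).trans (hυ i)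
  have hmart := M.integral_abs_sum_sub_gtilde_rpow_le hr hg hgK hgr hgtr hγ hgtυ n
  have hdrift := M.integral_abs_sum_sub_integral_rpow_le hr hK hR hκ hV hV0 hVlam hgt hgV hVr hυ n
  rw [Real.mul_rpow (by positivity) n.cast_nonneg] at hmart hdrift
  calc _ ≤ _ := M.integral_abs_sum_pair_sub_rpow_le_add (by linarith) hgr hgtr c n
    _ ≤ 4 ^ (r - 1) * ((2 * (r - 1)) ^ (r / 2) * (n : ℝ) ^ (r / 2) * (2 ^ (r - 1) * (γ + υ)))
        + (3 / 4) ^ (1 - r) * ((2 * (r - 1)) ^ (r / 2) * (n : ℝ) ^ (r / 2)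
          * ((4 * (R ^ 2 * q)) ^ (r / 2) * υ)) := by gcongr
    _ = (n : ℝ) ^ (r / 2) * (4 ^ (r - 1) * ((2 * (r - 1)) ^ (r / 2) * 2 ^ (r - 1) * (γ + υ))
        + (3 / 4) ^ (1 - r) * ((2 * (r - 1)) ^ (r / 2) * (4 * (R ^ 2 * q)) ^ (r / 2)) * υ) := by
      ring
    _ ≤ (n : ℝ) ^ (r / 2) * (4 ^ (r - 1) * ((16 * r) ^ (r / 2) * (γ + υ))
        + 4 ^ (r - 1) * (2 * r * (R ^ 2 * q)) ^ (r / 2) * υ) := by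
      gcongr ?_ * (?_ + ?_)
      · gcongr
        exact martingale_constant_le (by linarith)
      · exact mul_le_mul_of_nonneg_right (drift_constant_le hr (by positivity)) hυ0
    _ = _ := by ring

end MarkovChain

/-- Proposition 1 of the paper. Under the geometric ergodicity condition
(B1) (with rate `R`, exponent `κ`, invariant probability measure `lam` and Lyapunov function
`V ≥ 1` integrable w.r.t. `lam`) and condition (B2) (`|g̃| ≤ V`), for any starting point `x`
and any `r ≥ 2` with `υ*_r(x) < ∞` and `g*_r(x) < ∞` one has, for every `n ≥ 2`,
`E_x |W̃_n(g)|^r ≤ W*_r (1 + υ*_r(x) + g*_r(x)) / n^{r/2}`, where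
`W*_r = 4^{r-1}(1 + u*_r + |λ(g̃)|^r + (16r)^{r/2})` and
`u*_r = (2rR²e^κ/(e^κ-1))^{r/2}`. -/
theorem statement9
    {𝒳 : Type} [MeasurableSpace 𝒳] (M : MarkovChain 𝒳)
    (V : 𝒳 → ℝ) (hVmeas : Measurable V) (hV1 : ∀ x, 1 ≤ V x)
    (lam : Measure 𝒳) (hlamProb : IsProbabilityMeasure lam)
    (hlamV : Integrable V lam)
    (R κ : ℝ) (hR : 0 < R) (hκ : 0 < κ)
    (hB1 : ∀ (n : ℕ) (x : 𝒳) (f : 𝒳 → ℝ), Measurable f →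
      (∀ y, 0 < f y) → (∀ y, f y ≤ V y) →
      |(∫ ω, f (ω n) ∂(M.law x)) - ∫ y, f y ∂lam| ≤ R * V x * Real.exp (-κ * n))
    (g : 𝒳 → 𝒳 → ℝ) (hg : Measurable fun q : 𝒳 × 𝒳 => g q.1 q.2)
    (hgInt : ∀ u, Integrable (fun v => g v u) (M.K u))
    (hgtildeInt : Integrable (M.gtilde g) lam)
    (hB2 : ∀ x, |M.gtilde g x| ≤ V x) :
    ∀ (x : 𝒳) (r : ℝ), 2 ≤ r →
      M.upsStar V r x < ⊤ → M.gStar g r x < ⊤ →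
      ∀ n : ℕ, 2 ≤ n →
        (∫⁻ ω, ENNReal.ofReal
            (|(∑ j ∈ Finset.range n, g (ω (j + 1)) (ω j)) / n
                - ∫ y, M.gtilde g y ∂lam| ^ r) ∂(M.law x))
          ≤ ENNReal.ofReal ((4 : ℝ) ^ (r - 1) *
                (1 + (2 * r * R ^ 2 * Real.exp κ / (Real.exp κ - 1)) ^ (r / 2)
                  + |∫ y, M.gtilde g y ∂lam| ^ r + (16 * r) ^ (r / 2)))
              * (1 + M.upsStar V r x + M.gStar g r x) / (n : ℝ≥0∞) ^ (r / 2) := by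
  intro x r hr hυ hγ n hn
  have hr0 : 0 < r := by linarith
  have hq : 0 ≤ Real.exp κ / (Real.exp κ - 1) := by simpa using sum_exp_neg_mul_le hκ 0
  have hV0 (y : 𝒳) : 0 < V y := zero_lt_one.trans_le (hV1 y)
  have hVr := M.memLp_eval_and_integral_le_upsStar hr0 hVmeas (fun y => (hV0 y).le) hυ
  have hgr := M.memLp_pair_and_integral_le_gStar hr0 hg hγ
  have hsum := M.integral_abs_sum_pair_sub_rpow_le hr (M.isGeometricallyErgodic_of_law hB1) hR.le hκ
    hVmeas hV0 hlamV hg hgInt hB2 (fun i => (hVr i).1) (fun i => (hgr i).1) (fun i => (hVr i).2)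
    (fun i => (hgr i).2) n
  rw [← mul_assoc (2 * r), ← mul_div_assoc] at hsum
  set U := (2 * r * R ^ 2 * Real.exp κ / (Real.exp κ - 1)) ^ (r / 2)
  have hU : 0 ≤ U := Real.rpow_nonneg (by rw [mul_div_assoc]; positivity) _
  refine (lintegral_ofReal_abs_average_sub_rpow_le hr0 (fun i => (hgr i).1) (by lia) hsum).trans ?_
  rw [← ofReal_mul_one_add_toReal_div (by positivity) hυ.ne hγ.ne (by lia), mul_assoc (4 ^ (r - 1))]
  gcongr
  exact mul_add_add_mul_le hU (by positivity) (by positivity) toReal_nonneg toReal_nonneg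
end
end
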